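/- Fix p > 2, k ∈ (0, d_p), M, L > 0 and a function ε ↦ C_ε from (0,1) to (0,∞). There exists r₀ > 0, depending only on n, p, k, M, L and the function ε ↦ C_ε, and for all σ, θ > 0 a constant K = K(n, p, k, M, σ, θ) > 0, with the following property. Let ω ⊂ ℝⁿ be a bounded open set with C² boundary, a ∈ ∂ω, R > 0, D = B_{2R}(a) ∩ ω; assume ω satisfies an inner sphere condition of radius R at each point of B_R(a) ∩ ∂ω, that the distance function δ(x) = dist(x, ∂ω) is C² on the closure of D with ‖Δδ‖_{L∞(D)} ≤ L, and write ν(x) = ∇δ(x). Let T₀ ∈ ℝ, θ > 0 and let v, its first and second spatial derivatives and its first time derivative be continuous on D̄ × [T₀−θ, T₀], with v_t − Δv = |∇v|^p in D × (T₀−θ, T₀), v = 0 on (B_R(a) ∩ ∂ω) × (T₀−θ, T₀), |v_t| ≤ M in D × (T₀−θ, T₀), and suppose that for every ε ∈ (0,1), every (x,t) ∈ D × (T₀−θ, T₀) and every unit vector τ orthogonal to ν(x), |∇v(x,t)·τ|^p + |τ·(D²v(x,t))τ| ≤ ε δ(x)^{−βp} + C_ε. If for some r ∈ (0, min{r₀,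 R}] and some σ ∈ (0, r] one has |∇v(b + rν_b, t)·ν_b| ≤ k r^{−β} for all b ∈ B_σ(a) ∩ ∂ω and all t ∈ (T₀−θ, T₀), then |∇v| ≤ K on (B_{σ/8}(a) ∩ ω) × (T₀−θ/4, T₀). -/

import Mathlib

open Set Metric Filter RealInnerProductSpace

noncomputable section

set_option linter.unusedVariables false

/-- A set `Ω ⊆ ℝⁿ` has boundary of class `C²`: near each boundary point, `Ω` is the strict
sublevel set of a `C²` function with nonvanishing gradient (equivalently, after a rigid motion,
the boundary is locally the graph of a `C²` function with `Ω` strictly on one side). -/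
def IsC2Boundary {n : ℕ} (Ω : Set (EuclideanSpace ℝ (Fin n))) : Prop :=
  ∀ x ∈ frontier Ω, ∃ f : EuclideanSpace ℝ (Fin n) → ℝ, ∃ U ∈ nhds x,
    ContDiffOn ℝ 2 f U ∧ (∀ y ∈ U, fderiv ℝ f y ≠ 0) ∧
    U ∩ Ω = U ∩ {y | f y < 0} ∧ U ∩ frontier Ω = U ∩ {y | f y = 0}

/-- second-order jet of a function of one variable at `0` -/
def J2 (f : ℝ → ℝ) (f1 f2 : ℝ) : Prop :=
  ∃ f' : ℝ → ℝ, (∀ᶠ s in nhds (0:ℝ), HasDerivAt f (f' s) s) ∧ HasDerivAt f' f2 0 ∧ f' 0 = f1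

lemma J2.add {f g : ℝ → ℝ} {f1 f2 g1 g2 : ℝ} (hf : J2 f f1 f2) (hg : J2 g g1 g2) :
    J2 (fun s => f s + g s) (f1 + g1) (f2 + g2) := by
  obtain ⟨f', h1, h2, h3⟩ := hf
  obtain ⟨g', k1, k2, k3⟩ := hg
  refine ⟨fun s => f' s + g' s, ?_, h2.add k2, by simp [h3, k3]⟩
  filter_upwards [h1, k1] with s a b using a.add b

lemma J2.sub {f g : ℝ → ℝ} {f1 f2 g1 g2 : ℝ} (hf : J2 f f1 f2) (hg : J2 g g1 g2) :
    J2 (fun s => f s - g s) (f1 - g1) (f2 - g2) := by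
  obtain ⟨f', h1, h2, h3⟩ := hf
  obtain ⟨g', k1, k2, k3⟩ := hg
  refine ⟨fun s => f' s - g' s, ?_, h2.sub k2, by simp [h3, k3]⟩
  filter_upwards [h1, k1] with s a b using a.sub b

lemma J2.const_mul {f : ℝ → ℝ} {f1 f2 : ℝ} (c : ℝ) (hf : J2 f f1 f2) :
    J2 (fun s => c * f s) (c * f1) (c * f2) := by
  obtain ⟨f', h1, h2, h3⟩ := hf
  refine ⟨fun s => c * f' s, ?_, h2.const_mul c, by simp [h3]⟩
  filter_upwards [h1] with s a using a.const_mul c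

lemma J2.rpow {f : ℝ → ℝ} {f1 f2 : ℝ} (hf : J2 f f1 f2) (h0 : 0 < f 0) (q : ℝ) :
    J2 (fun s => f s ^ q) (q * f 0 ^ (q - 1) * f1)
      (q * (q - 1) * f 0 ^ (q - 2) * f1 ^ 2 + q * f 0 ^ (q - 1) * f2) := by
  obtain ⟨f', h1, h2, h3⟩ := hf
  have hc : ContinuousAt f 0 := h1.self_of_nhds.continuousAt
  have hpos : ∀ᶠ s in nhds (0:ℝ), 0 < f s := hc.eventually (lt_mem_nhds h0)
  refine ⟨fun s => q * f s ^ (q - 1) * f' s, ?_, ?_, by simp [h3]⟩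
  · filter_upwards [h1, hpos] with s a b
    refine (a.rpow_const (p := q) (Or.inl b.ne')).congr_deriv ?_
    ring
  · have := ((h1.self_of_nhds.rpow_const (p := q - 1) (Or.inl h0.ne')).const_mul q).mul h2
    refine this.congr_deriv ?_
    rw [h3, show q - 1 - 1 = q - 2 by ring]
    ring

lemma J2.poly (A B C : ℝ) : J2 (fun s => A + B * s + C * s ^ 2) B (2 * C) := by
  refine ⟨fun s => B + 2 * C * s, ?_, ?_, by simp⟩
  · refine Eventually.of_forall fun s => ?_
    have := (((hasDerivAt_id s).const_mul B).const_add A).add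
      (((hasDerivAt_id s).pow 2).const_mul C)
    refine this.congr_deriv ?_
    simp; ring
  · simpa using ((hasDerivAt_id (0:ℝ)).const_mul (2 * C)).const_add B

lemma J2.sq {f : ℝ → ℝ} {f1 f2 : ℝ} (hf : J2 f f1 f2) :
    J2 (fun s => f s ^ 2) (2 * f 0 * f1) (2 * (f1 ^ 2 + f 0 * f2)) := by
  obtain ⟨f', h1, h2, h3⟩ := hf
  refine ⟨fun s => 2 * f s * f' s, ?_, ?_, by simp [h3]⟩
  · filter_upwards [h1] with s a
    refine (a.pow 2).congr_deriv ?_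
    simp
  · have := ((h1.self_of_nhds).const_mul 2).mul h2
    refine this.congr_deriv ?_
    rw [h3]; ring

lemma J2.max {f : ℝ → ℝ} {f1 f2 : ℝ} (hf : J2 f f1 f2) (hm : IsLocalMax f 0) :
    f1 = 0 ∧ f2 ≤ 0 := by
  obtain ⟨f', h1, h2, h3⟩ := hf
  have e1 : f' 0 = 0 := hm.hasDerivAt_eq_zero h1.self_of_nhds
  refine ⟨h3 ▸ e1, ?_⟩
  by_contra hlt
  push Not at hlt
  -- the derivative is positive on a right neighbourhood
  have hs : ∀ᶠ s in nhdsWithin (0:ℝ) {0}ᶜ, 0 < s⁻¹ * f' s := by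
    have := (hasDerivAt_iff_tendsto_slope.1 h2).eventually (lt_mem_nhds hlt)
    filter_upwards [this] with s hs
    simpa [slope, e1] using hs
  have hs' : ∀ᶠ s in nhds (0:ℝ), s ≠ 0 → 0 < s⁻¹ * f' s := by
    simpa [eventually_nhdsWithin_iff] using hs
  obtain ⟨η, hη, hb⟩ := Metric.eventually_nhds_iff.1 (hs'.and (h1.and hm))
  have hmem : ∀ s ∈ Icc (0:ℝ) (η/2), dist s 0 < η := by
    intro s hs
    rw [Real.dist_eq, sub_zero, abs_of_nonneg hs.1]; linarith [hs.2]
  have hmono : StrictMonoOn f (Icc 0 (η/2)) := by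
    apply strictMonoOn_of_deriv_pos (convex_Icc _ _)
    · intro s hs
      exact (hb (hmem s hs)).2.1.continuousAt.continuousWithinAt
    · intro s hs
      rw [interior_Icc] at hs
      have h := hb (hmem s ⟨hs.1.le, hs.2.le⟩)
      rw [h.2.1.deriv]
      have := h.1 hs.1.ne'
      exact (pos_iff_pos_of_mul_pos this).1 (inv_pos.2 hs.1)
  have hlt' := hmono (left_mem_Icc.2 (by positivity)) (right_mem_Icc.2 (by positivity))
    (show (0:ℝ) < η/2 by positivity)
  have := (hb (hmem (η/2) (right_mem_Icc.2 (by positivity)))).2.2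
  linarith

section geo
variable {n : ℕ}

/-- jet of a C² function along a line -/
lemma J2.line {u : EuclideanSpace ℝ (Fin n) → ℝ}
    {G : EuclideanSpace ℝ (Fin n) → EuclideanSpace ℝ (Fin n)}
    {H : EuclideanSpace ℝ (Fin n) →L[ℝ] EuclideanSpace ℝ (Fin n)} {x : EuclideanSpace ℝ (Fin n)}
    (h1 : ∀ᶠ y in nhds x, HasGradientAt u (G y) y) (h2 : HasFDerivAt G H x)
    (e : EuclideanSpace ℝ (Fin n)) :
    J2 (fun s => u (x + s • e)) ⟪G x, e⟫ ⟪H e, e⟫ := by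
  have hl : ∀ s : ℝ, HasDerivAt (fun s : ℝ => x + s • e) e s := fun s => by
    simpa using ((hasDerivAt_id s).smul_const e).const_add x
  have hc : Tendsto (fun s : ℝ => x + s • e) (nhds 0) (nhds x) := by
    simpa using (hl 0).continuousAt.tendsto
  refine ⟨fun s => ⟪G (x + s • e), e⟫, ?_, ?_, by simp⟩
  · filter_upwards [hc.eventually h1] with s hs
    have := hs.hasFDerivAt.comp_hasDerivAt s (hl s)
    exact this.congr_deriv (by simp)
  · have h2' : HasFDerivAt G H (x + (0:ℝ) • e) := by simpa using h2
    have := (h2'.comp_hasDerivAt (0:ℝ) (hl 0)).inner ℝ (hasDerivAt_const (0:ℝ) e)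
    simpa using this

lemma J2.line' {u : EuclideanSpace ℝ (Fin n) → ℝ} {x : EuclideanSpace ℝ (Fin n)}
    {U : Set (EuclideanSpace ℝ (Fin n))} (hU : IsOpen U) (hx : x ∈ U) (h : ContDiffOn ℝ 2 u U)
    (e : EuclideanSpace ℝ (Fin n)) :
    J2 (fun s => u (x + s • e)) (fderiv ℝ u x e) (fderiv ℝ (fun y => fderiv ℝ u y e) x e) := by
  have hl : ∀ s : ℝ, HasDerivAt (fun s : ℝ => x + s • e) e s := fun s => by
    simpa using ((hasDerivAt_id s).smul_const e).const_add x
  have hc : Tendsto (fun s : ℝ => x + s • e) (nhds 0) (nhds x) := by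
    simpa using (hl 0).continuousAt.tendsto
  refine ⟨fun s => fderiv ℝ u (x + s • e) e, ?_, ?_, by simp⟩
  · filter_upwards [hc.eventually (hU.mem_nhds hx)] with s hs
    have hd : DifferentiableAt ℝ u (x + s • e) :=
      (h.contDiffAt (hU.mem_nhds hs)).differentiableAt (by norm_num)
    exact hd.hasFDerivAt.comp_hasDerivAt s (hl s)
  · have hd : DifferentiableAt ℝ (fun y => fderiv ℝ u y e) x := by
      have : ContDiffAt ℝ 1 (fderiv ℝ u) x :=
        (h.contDiffAt (hU.mem_nhds hx)).fderiv_right (by norm_num)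
      exact (this.differentiableAt (by norm_num)).clm_apply (differentiableAt_const e)
    have h2' : HasFDerivAt (fun y => fderiv ℝ u y e) (fderiv ℝ (fun y => fderiv ℝ u y e) x)
        (x + (0:ℝ) • e) := by simpa using hd.hasFDerivAt
    exact h2'.comp_hasDerivAt (0:ℝ) (hl 0)

/-- trace in the standard basis -/
def tr (H : EuclideanSpace ℝ (Fin n) →L[ℝ] EuclideanSpace ℝ (Fin n)) : ℝ :=
  ∑ i : Fin n, ⟪H (EuclideanSpace.single i (1 : ℝ)), EuclideanSpace.single i (1 : ℝ)⟫

lemma tr_eq (H : EuclideanSpace ℝ (Fin n) →L[ℝ] EuclideanSpace ℝ (Fin n))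
    (b : OrthonormalBasis (Fin n) ℝ (EuclideanSpace ℝ (Fin n))) :
    tr H = ∑ i, ⟪H (b i), b i⟫ := by
  have h1 := LinearMap.trace_eq_sum_inner (H : EuclideanSpace ℝ (Fin n) →ₗ[ℝ] EuclideanSpace ℝ (Fin n)) b
  have h2 := LinearMap.trace_eq_sum_inner (H : EuclideanSpace ℝ (Fin n) →ₗ[ℝ] EuclideanSpace ℝ (Fin n)) (EuclideanSpace.basisFun (Fin n) ℝ)
  rw [h1] at h2
  simp only [tr]
  simp only [EuclideanSpace.basisFun_apply, ContinuousLinearMap.coe_coe] at h2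
  simp_rw [real_inner_comm] at h2 ⊢
  rw [← h2]

lemma tr_split (H : EuclideanSpace ℝ (Fin n) →L[ℝ] EuclideanSpace ℝ (Fin n))
    (ν : EuclideanSpace ℝ (Fin n)) (hν : ‖ν‖ = 1) (hn : 1 ≤ n) (T : ℝ) (hT : 0 ≤ T)
    (h : ∀ τ, ‖τ‖ = 1 → ⟪τ, ν⟫ = 0 → |⟪H τ, τ⟫| ≤ T) :
    |tr H - ⟪H ν, ν⟫| ≤ n * T := by
  classical
  let i0 : Fin n := ⟨0, hn⟩
  have hv : Orthonormal ℝ (({i0} : Set (Fin n)).domRestrict (fun _ : Fin n => ν)) := by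
    constructor
    · intro i; exact hν
    · intro i j hij
      exact absurd (Subsingleton.elim i j) hij
  obtain ⟨b, hb⟩ := hv.exists_orthonormalBasis_extension_of_card_eq (by simp)
  have hb0 : b i0 = ν := hb i0 rfl
  rw [tr_eq H b, ← Finset.add_sum_erase _ _ (Finset.mem_univ i0), hb0, add_sub_cancel_left]
  calc _ ≤ ∑ i ∈ Finset.univ.erase i0, |⟪H (b i), b i⟫| := Finset.abs_sum_le_sum_abs _ _
    _ ≤ ∑ i ∈ Finset.univ.erase i0, T := by
        apply Finset.sum_le_sum
        intro i hi
        apply h _ (b.orthonormal.1 i)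
        rw [← hb0]
        exact b.orthonormal.2 (Finset.ne_of_mem_erase hi)
    _ ≤ n * T := by
        rw [Finset.sum_const, nsmul_eq_mul]
        gcongr
        calc _ ≤ (Finset.univ : Finset (Fin n)).card := Finset.card_le_card (Finset.erase_subset _ _)
          _ = n := by simp
end geo

lemma poisson_grad {n : ℕ} {u : EuclideanSpace ℝ (Fin n) → ℝ}
    {G : EuclideanSpace ℝ (Fin n) → EuclideanSpace ℝ (Fin n)}
    {H : EuclideanSpace ℝ (Fin n) → (EuclideanSpace ℝ (Fin n) →L[ℝ] EuclideanSpace ℝ (Fin n))}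
    {W : Set (EuclideanSpace ℝ (Fin n))} (hW : IsOpen W)
    (h1 : ∀ y ∈ W, HasGradientAt u (G y) y) (h2 : ∀ y ∈ W, HasFDerivAt G (H y) y)
    {x0 : EuclideanSpace ℝ (Fin n)} {ρ S N : ℝ} (hρ : 0 < ρ) (hS : 0 ≤ S) (hN : 0 ≤ N)
    (hsub : closedBall x0 ρ ⊆ W) (hu : ∀ y ∈ closedBall x0 ρ, |u y| ≤ S)
    (hH : ∀ y ∈ closedBall x0 ρ, |tr (H y)| < N) :
    ‖G x0‖ ≤ n * S / ρ + N * ρ / 2 := by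
  by_cases hG : G x0 = 0
  · rw [hG, norm_zero]; positivity
  have hGn : 0 < ‖G x0‖ := norm_pos_iff.2 hG
  obtain ⟨e, he⟩ : ∃ e, e = (‖G x0‖)⁻¹ • G x0 := ⟨_, rfl⟩
  have he1 : ‖e‖ = 1 := by rw [he, norm_smul, norm_inv, norm_norm, inv_mul_cancel₀ hGn.ne']
  have hGe : ⟪G x0, e⟫ = ‖G x0‖ := by
    rw [he, inner_smul_right, real_inner_self_eq_norm_sq]; field_simp
  -- reflection
  let F := (ℝ ∙ e)ᗮ.reflection
  have hFe : F e = -e := Submodule.reflection_orthogonalComplement_singleton_eq_neg e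
  have hF0 : ∀ x, ⟪x, e⟫ = 0 → F x = x := by
    intro x hx
    apply Submodule.reflection_mem_subspace_eq_self
    rw [Submodule.mem_orthogonal_singleton_iff_inner_right, real_inner_comm]; exact hx
  have hFn : ∀ x, ‖F x‖ = ‖x‖ := F.norm_map
  set φ : EuclideanSpace ℝ (Fin n) → ℝ := fun x => (1/2) * (u (x0 + x) - u (x0 + F x)) with hφ
  set ψ : EuclideanSpace ℝ (Fin n) → ℝ := fun x => S / ρ^2 * (‖x‖^2 + n * (ρ * ⟪x, e⟫ - ⟪x, e⟫^2))
    + N / 2 * (ρ * ⟪x, e⟫ - ⟪x, e⟫^2) with hψ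
  have hin : ∀ x, ‖x‖ ≤ ρ → x0 + x ∈ closedBall x0 ρ := by intro x hx; simpa using hx
  have hxe : ∀ x : EuclideanSpace ℝ (Fin n), ⟪x, e⟫ ≤ ‖x‖ := fun x => by
    have := real_inner_le_norm x e; rwa [he1, mul_one] at this
  -- comparison
  have key : ∀ x, ‖x‖ ≤ ρ → 0 ≤ ⟪x, e⟫ → φ x ≤ ψ x := by
    have hcomp : IsCompact (closedBall (0:EuclideanSpace ℝ (Fin n)) ρ ∩ {x | 0 ≤ ⟪x, e⟫}) :=
      (isCompact_closedBall _ _).inter_right (isClosed_le continuous_const (by fun_prop))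
    have huc : ContinuousOn u (closedBall x0 ρ) := fun y hy =>
      (h1 y (hsub hy)).continuousAt.continuousWithinAt
    have hcont : ContinuousOn (fun x => φ x - ψ x)
        (closedBall (0:EuclideanSpace ℝ (Fin n)) ρ ∩ {x | 0 ≤ ⟪x, e⟫}) := by
      apply ContinuousOn.sub
      · apply ContinuousOn.mul continuousOn_const
        apply ContinuousOn.sub
        · apply huc.comp (by fun_prop)
          intro x hx; exact hin x (by simpa using hx.1)
        · apply huc.comp (Continuous.continuousOn (continuous_const.add F.continuous))
          intro x hx; exact hin _ (by rw [hFn]; simpa using hx.1)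
      · apply Continuous.continuousOn; fun_prop
    obtain ⟨x, hx, hmax⟩ := hcomp.exists_isMaxOn ⟨0, by simp [hρ.le]⟩ hcont
    have hxn : ‖x‖ ≤ ρ := by simpa using hx.1
    have hx0 : 0 ≤ ⟪x, e⟫ := hx.2
    suffices hle : φ x - ψ x ≤ 0 by
      intro y hy hy0
      have := hmax (show y ∈ _ from ⟨by simpa using hy, hy0⟩)
      simp only [mem_ofPred_eq] at this
      linarith
    have hnn : 0 ≤ ρ * ⟪x, e⟫ - ⟪x, e⟫^2 := by nlinarith [hxe x]
    have hφS : φ x ≤ S := by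
      have a1 := abs_le.1 (hu _ (hin x hxn))
      have a2 := abs_le.1 (hu _ (hin (F x) (by rw [hFn]; exact hxn)))
      simp only [hφ]; linarith [a1.2, a2.1]
    have hψ0 : 0 ≤ ψ x := by simp only [hψ]; positivity
    rcases hx0.eq_or_lt with h0 | h0
    · have : φ x = 0 := by simp [hφ, hF0 x h0.symm]
      linarith
    rcases hxn.eq_or_lt with hb | hb
    · have : S ≤ ψ x := by
        have h3 : S / ρ^2 * ‖x‖^2 = S := by rw [hb]; field_simp
        have h4 : 0 ≤ S / ρ^2 * (n * (ρ * ⟪x, e⟫ - ⟪x, e⟫^2)) := by positivity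
        have h5 : 0 ≤ N / 2 * (ρ * ⟪x, e⟫ - ⟪x, e⟫^2) := by positivity
        simp only [hψ]; rw [mul_add]; linarith
      linarith
    exfalso
    -- interior max
    have hloc : IsLocalMax (fun x => φ x - ψ x) x := by
      apply hmax.isLocalMax
      apply inter_mem
      · exact mem_of_superset (isOpen_ball.mem_nhds (by simpa using hb)) ball_subset_closedBall
      · have : IsOpen {x : EuclideanSpace ℝ (Fin n) | 0 < ⟪x, e⟫} :=
          isOpen_lt continuous_const (by fun_prop)
        exact mem_of_superset (this.mem_nhds h0) (fun y hy => by
          have h : 0 < ⟪y, e⟫ := hy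
          have h' : 0 ≤ ⟪y, e⟫ := h.le
          exact h')
    have hx1W : x0 + x ∈ W := hsub (hin x hxn)
    have hx2W : x0 + F x ∈ W := hsub (hin _ (by rw [hFn]; exact hxn))
    have hdir : ∀ d : EuclideanSpace ℝ (Fin n), (1/2) * (⟪H (x0 + x) d, d⟫
        - ⟪H (x0 + F x) (F d), F d⟫) - (S / ρ^2 * (2 * ‖d‖^2 - 2 * n * ⟪d, e⟫^2) - N * ⟪d, e⟫^2) ≤ 0 := by
      intro d
      have j1 := J2.line (Filter.mem_of_superset (hW.mem_nhds hx1W) h1) (h2 _ hx1W) d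
      have j2 := J2.line (Filter.mem_of_superset (hW.mem_nhds hx2W) h1) (h2 _ hx2W) (F d)
      have j3 := J2.poly (ψ x) (S / ρ^2 * (2 * ⟪x, d⟫ + n * (ρ * ⟪d, e⟫ - 2 * ⟪x, e⟫ * ⟪d, e⟫)) +
        N / 2 * (ρ * ⟪d, e⟫ - 2 * ⟪x, e⟫ * ⟪d, e⟫))
        (S / ρ^2 * (‖d‖^2 - n * ⟪d, e⟫^2) - N / 2 * ⟪d, e⟫^2)
      have j := ((j1.sub j2).const_mul (1/2)).sub j3
      have hm : IsLocalMax (fun s : ℝ => φ (x + s • d) - ψ (x + s • d)) 0 := by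
        have hc : Tendsto (fun s : ℝ => x + s • d) (nhds 0) (nhds x) := by
          have : Continuous (fun s : ℝ => x + s • d) := by fun_prop
          simpa using this.tendsto 0
        have := hc.eventually hloc
        simpa [IsLocalMax, IsMaxFilter] using this
      have heq : (fun s : ℝ => φ (x + s • d) - ψ (x + s • d)) = fun s =>
        1 / 2 * (u (x0 + x + s • d) - u (x0 + F x + s • F d)) -
        (ψ x + (S / ρ^2 * (2 * ⟪x, d⟫ + n * (ρ * ⟪d, e⟫ - 2 * ⟪x, e⟫ * ⟪d, e⟫)) +
        N / 2 * (ρ * ⟪d, e⟫ - 2 * ⟪x, e⟫ * ⟪d, e⟫)) * s +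
        (S / ρ^2 * (‖d‖^2 - n * ⟪d, e⟫^2) - N / 2 * ⟪d, e⟫^2) * s^2) := by
        funext s
        simp only [hφ, hψ, map_add, map_smul, add_assoc]
        rw [norm_add_sq_real, norm_smul, inner_smul_right, inner_add_left, inner_smul_left, mul_pow,
          Real.norm_eq_abs, sq_abs]
        simp only [conj_trivial]
        ring
      rw [heq] at hm
      have := (j.max hm).2
      linarith
    let b := EuclideanSpace.basisFun (Fin n) ℝ
    have hsum := Finset.sum_nonpos (s := Finset.univ) (fun i _ => hdir (b i))
    have e1 : ∑ i, ⟪H (x0 + x) (b i), b i⟫ = tr (H (x0 + x)) := (tr_eq _ b).symm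
    have e2 : ∑ i, ⟪H (x0 + F x) (F (b i)), F (b i)⟫ = tr (H (x0 + F x)) := by
      rw [tr_eq _ (b.map F)]; simp
    have e3 : ∑ i, ⟪b i, e⟫^2 = 1 := by
      have := b.sum_sq_norm_inner_right e
      rw [he1] at this
      simpa using this
    have e4 : ∑ i, ‖b i‖^2 = n := by simp
    have hsum' : ∑ i, ((1/2) * (⟪H (x0 + x) (b i), b i⟫
        - ⟪H (x0 + F x) (F (b i)), F (b i)⟫) - (S / ρ^2 * (2 * ‖b i‖^2 - 2 * n * ⟪b i, e⟫^2)
          - N * ⟪b i, e⟫^2))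
        = (1/2) * (tr (H (x0 + x)) - tr (H (x0 + F x))) - (S / ρ^2 * (2 * n - 2 * n * 1) - N * 1) := by
      rw [← e1, ← e2]
      simp only [Finset.sum_sub_distrib, ← Finset.mul_sum, e3, e4]
    rw [hsum'] at hsum
    have a1 := abs_lt.1 (hH _ (hin x hxn))
    have a2 := abs_lt.1 (hH _ (hin (F x) (by rw [hFn]; exact hxn)))
    linarith [a1.1, a2.2]
  -- derivative at 0
  have hx0W : x0 ∈ W := hsub (by simp [hρ.le])
  have hd1 : HasDerivAt (fun s : ℝ => φ (s • e)) ‖G x0‖ 0 := by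
    have hh : ∀ d : EuclideanSpace ℝ (Fin n),
        HasDerivAt (fun s : ℝ => u (x0 + s • d)) ⟪G x0, d⟫ 0 := by
      intro d
      obtain ⟨f', q1, q2, q3⟩ := J2.line (Filter.mem_of_superset (hW.mem_nhds hx0W) h1) (h2 _ hx0W) d
      rw [← q3]; exact q1.self_of_nhds
    have := ((hh e).sub (hh (-e))).const_mul (1/2)
    refine (this.congr_deriv ?_).congr_of_eventuallyEq (Eventually.of_forall fun s => ?_)
    · rw [inner_neg_right, hGe]; ring
    · simp [hφ, hFe]
  have hd2 : HasDerivAt (fun s : ℝ => ψ (s • e)) (n * S / ρ + N * ρ / 2) 0 := by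
    have heq : (fun s : ℝ => ψ (s • e)) = fun s => 0 + (n * S / ρ + N * ρ / 2) * s
        + (S / ρ^2 * (1 - n) - N / 2) * s^2 := by
      funext s
      simp only [hψ, inner_smul_left, real_inner_self_eq_norm_sq, he1, norm_smul, Real.norm_eq_abs,
        mul_one, sq_abs, conj_trivial]
      field_simp
      ring
    rw [heq]
    obtain ⟨f', q1, q2, q3⟩ := J2.poly 0 (n * S / ρ + N * ρ / 2) (S / ρ^2 * (1 - n) - N / 2)
    exact q1.self_of_nhds.congr_deriv q3
  have hd := hd2.sub hd1
  by_contra hlt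
  push Not at hlt
  -- ψ - φ has negative derivative at 0 but is ≥ 0 to the right
  have := (hasDerivAt_iff_tendsto_slope.1 hd).eventually (gt_mem_nhds (sub_neg.2 hlt))
  have h3 : ∀ᶠ s in nhdsWithin (0:ℝ) (Ioi 0), slope ((fun s : ℝ => ψ (s • e)) - fun s : ℝ => φ (s • e)) 0 s < 0 :=
    this.filter_mono (nhdsWithin_mono _ (fun s hs => ne_of_gt hs))
  have h4 : ∀ᶠ s in nhdsWithin (0:ℝ) (Ioi 0), s ∈ Ioo 0 ρ := Ioo_mem_nhdsGT hρ
  obtain ⟨s, hs1, hs2⟩ := (h3.and h4).exists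
  have hk := key (s • e) (by rw [norm_smul, he1, mul_one, Real.norm_eq_abs, abs_of_pos hs2.1]; exact hs2.2.le)
    (by rw [inner_smul_left, real_inner_self_eq_norm_sq, he1]; simpa using hs2.1.le)
  have z1 : φ 0 = 0 := by simp [hφ]
  have z2 : ψ 0 = 0 := by simp [hψ]
  simp only [slope, Pi.sub_apply, zero_smul, z1, z2, sub_zero, vsub_eq_sub, smul_eq_mul] at hs1
  have : 0 ≤ s⁻¹ * (ψ (s • e) - φ (s • e)) := mul_nonneg (inv_nonneg.2 hs2.1.le) (by linarith)
  linarith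

/-- interior gradient bound from a linear bound on `u` -/
lemma interior_grad {n : ℕ} {u : EuclideanSpace ℝ (Fin n) → ℝ}
    {G : EuclideanSpace ℝ (Fin n) → EuclideanSpace ℝ (Fin n)}
    {H : EuclideanSpace ℝ (Fin n) → (EuclideanSpace ℝ (Fin n) →L[ℝ] EuclideanSpace ℝ (Fin n))}
    {W : Set (EuclideanSpace ℝ (Fin n))} (hW : IsOpen W)
    (h1 : ∀ y ∈ W, HasGradientAt u (G y) y) (h2 : ∀ y ∈ W, HasFDerivAt G (H y) y)
    {x0 : EuclideanSpace ℝ (Fin n)} {d μ B S M : ℝ} (hd : 0 < d) (hμ : 0 < μ)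
    (hB : 0 ≤ B) (hBμ : B * μ ≤ 1 / 2) (hS : 0 ≤ S) (hM : 0 ≤ M)
    (hsub : closedBall x0 (μ * d) ⊆ W) (hu : ∀ y ∈ closedBall x0 (μ * d), |u y| ≤ S * d)
    (hH : ∀ y ∈ closedBall x0 (μ * d), |tr (H y)| ≤ M + B / d * ‖G y‖) :
    ‖G x0‖ ≤ 4 * n * S / μ + (M + 1) * (μ * d) := by
  have hμd : 0 < μ * d := by positivity
  have hcont : ContinuousOn (fun x => (μ * d - dist x x0) * ‖G x‖) (closedBall x0 (μ * d)) := by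
    apply ContinuousOn.mul (by fun_prop)
    apply ContinuousOn.norm
    exact fun y hy => (h2 y (hsub hy)).continuousAt.continuousWithinAt
  obtain ⟨x1, hx1, hmax⟩ := (isCompact_closedBall x0 (μ * d)).exists_isMaxOn
    ⟨x0, by simp [hμd.le]⟩ hcont
  obtain ⟨N, hNdef⟩ : ∃ N, N = (μ * d - dist x1 x0) * ‖G x1‖ := ⟨_, rfl⟩
  obtain ⟨ρ, hρdef⟩ : ∃ ρ, ρ = μ * d - dist x1 x0 := ⟨_, rfl⟩
  have hρ0 : 0 ≤ ρ := by rw [hρdef]; rw [mem_closedBall] at hx1; linarith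
  have hρle : ρ ≤ μ * d := by rw [hρdef]; linarith [dist_nonneg (x := x1) (y := x0)]
  have hN0 : 0 ≤ N := by rw [hNdef, ← hρdef]; positivity
  have hmax' : ∀ y ∈ closedBall x0 (μ * d), (μ * d - dist y x0) * ‖G y‖ ≤ N := by
    intro y hy; rw [hNdef]; exact hmax hy
  have hx0 := hmax' x0 (by simp [hμd.le])
  rw [dist_self, sub_zero] at hx0
  have hNle : N ≤ 4 * n * (S * d) + (M + 1) * (μ * d) * (μ * d) := by
    rcases hρ0.eq_or_lt with h0 | hρ
    · have : N = 0 := by rw [hNdef, ← hρdef, ← h0, zero_mul]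
      rw [this]; positivity
    have hsub1 : closedBall x1 (ρ / 2) ⊆ closedBall x0 (μ * d) := by
      apply closedBall_subset_closedBall'
      linarith
    have hGy : ∀ y ∈ closedBall x1 (ρ / 2), ‖G y‖ ≤ 2 * N / ρ := by
      intro y hy
      have := hmax' y (hsub1 hy)
      rw [mem_closedBall] at hy
      have htri := dist_triangle y x1 x0
      have hh : ρ / 2 ≤ μ * d - dist y x0 := by linarith
      rw [le_div_iff₀ hρ]
      nlinarith [norm_nonneg (G y)]
    have hp := poisson_grad hW h1 h2 (x0 := x1) (ρ := ρ / 2) (S := S * d)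
      (N := M + 1 + B / d * (2 * N / ρ)) (by positivity) (by positivity) (by positivity)
      (hsub1.trans hsub) (fun y hy => hu y (hsub1 hy)) (fun y hy => by
        have a1 := hH y (hsub1 hy)
        have a2 : B / d * ‖G y‖ ≤ B / d * (2 * N / ρ) := by
          have := hGy y hy; gcongr
        linarith)
    have hN1 : N = ρ * ‖G x1‖ := by rw [hNdef, ← hρdef]
    have hm := mul_le_mul_of_nonneg_left hp hρ.le
    rw [← hN1] at hm
    have e : ρ * (n * (S * d) / (ρ / 2) + (M + 1 + B / d * (2 * N / ρ)) * (ρ / 2) / 2)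
      = 2 * n * (S * d) + (M + 1) * ρ ^ 2 / 4 + B * (ρ / d) * N / 2 := by field_simp; ring
    rw [e] at hm
    have hρd : ρ / d ≤ μ := by rw [div_le_iff₀ hd]; exact hρle
    have b1 : B * (ρ / d) ≤ 1 / 2 := (mul_le_mul_of_nonneg_left hρd hB).trans hBμ
    have b2 : B * (ρ / d) * N ≤ 1 / 2 * N := mul_le_mul_of_nonneg_right b1 hN0
    have b3 : ρ ^ 2 ≤ (μ * d) * (μ * d) := by nlinarith
    have b4 : (M + 1) * ρ ^ 2 ≤ (M + 1) * ((μ * d) * (μ * d)) :=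
      mul_le_mul_of_nonneg_left b3 (by linarith)
    have b5 : 0 ≤ n * (S * d) := by positivity
    nlinarith
  have : μ * d * ‖G x0‖ ≤ μ * d * (4 * n * S / μ + (M + 1) * (μ * d)) := by
    have e : μ * d * (4 * n * S / μ + (M + 1) * (μ * d))
      = 4 * n * (S * d) + (M + 1) * (μ * d) * (μ * d) := by field_simp
    rw [e]; exact hx0.trans hNle
  exact le_of_mul_le_mul_left this hμd

lemma strict_ineq {β p k1 ι Y L a g Dd Dr rt DP Pt : ℝ} (hY0 : 0 < Y) (hY1 : Y ≤ 1)
    (hk1 : 0 < k1) (hι0 : 0 < ι) (hι1 : ι < 1) (hYL : k1 * Y * (L + 2) ≤ ι)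
    (hβ : 0 < β) (hp : 0 < p) (hβp : β * p = β + 1)
    (hι : 0 < k1 * β * (1 - ι) ^ 2 - (k1 * (1 + ι) + ι) ^ p - 3 * ι)
    (ha : 1 - ι ≤ a) (hg0 : 0 ≤ g) (hg : g ≤ k1 * Y ^ (-β) * (1 + ι) + ι)
    (hDd : |Dd| ≤ L) (hDr : |Dr| ≤ ι) (hrt : |rt| ≤ ι) (hDP : |DP| ≤ ι) (hPt : |Pt| ≤ ι) :
    g ^ p < k1 * Y ^ (-β) * rt - Pt -
      (k1 * Y ^ (-β) * (Dd + Dr) - k1 * β * Y ^ (-β - 1) * a ^ 2 - DP) := by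
  obtain ⟨X, hX⟩ : ∃ X, X = Y ^ (-β) := ⟨_, rfl⟩
  obtain ⟨Z, hZ⟩ : ∃ Z, Z = Y ^ (-β - 1) := ⟨_, rfl⟩
  have hX1 : 1 ≤ X := by rw [hX]; exact Real.one_le_rpow_of_pos_of_le_one_of_nonpos hY0 hY1 (by linarith)
  have hZ1 : 1 ≤ Z := by rw [hZ]; exact Real.one_le_rpow_of_pos_of_le_one_of_nonpos hY0 hY1 (by linarith)
  have hXZ : X = Y * Z := by
    rw [hX, hZ, Real.rpow_sub_one hY0.ne']; field_simp
  have hXp : X ^ p = Z := by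
    rw [hX, hZ, ← Real.rpow_mul hY0.le]; congr 1; linarith
  rw [← hX] at hg ⊢
  rw [← hZ]
  have hgp : g ^ p ≤ Z * (k1 * (1 + ι) + ι) ^ p := by
    rw [← hXp, ← Real.mul_rpow (by linarith) (by positivity)]
    apply Real.rpow_le_rpow hg0 _ hp.le
    nlinarith
  have hsum : |rt - Dd - Dr| ≤ L + 2 := by
    have := abs_le.1 hDd; have := abs_le.1 hDr; have := abs_le.1 hrt
    rw [abs_le]; constructor <;> linarith
  have h1 : -(ι * Z) ≤ k1 * X * (rt - Dd - Dr) := by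
    have h2 : k1 * X * (L + 2) ≤ ι * Z := by
      rw [hXZ]; nlinarith
    have h3 : k1 * X * (-(L + 2)) ≤ k1 * X * (rt - Dd - Dr) :=
      mul_le_mul_of_nonneg_left (abs_le.1 hsum).1 (by positivity)
    linarith
  have h2 : k1 * β * Z * (1 - ι) ^ 2 ≤ k1 * β * Z * a ^ 2 := by
    apply mul_le_mul_of_nonneg_left _ (by positivity)
    nlinarith
  have h3 : 0 < Z * (k1 * β * (1 - ι) ^ 2 - (k1 * (1 + ι) + ι) ^ p - 3 * ι) := by positivity
  have h4 := abs_le.1 hDP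
  have h5 := abs_le.1 hPt
  nlinarith

lemma P_bounds {κ j θ τ w σ1 n : ℝ} (hκ : 0 < κ) (hn : 0 ≤ n) (hθ : 0 < θ) (hσ1 : σ1 ^ 2 ≤ 1)
    (hw0 : 0 ≤ w) (hw : w < σ1 ^ 2) (hτ0 : 0 < τ) (hτ : τ ≤ θ)
    (hκj : κ * (16 + 4 * n) * (θ + θ ^ 2) ≤ j) :
    κ * ((σ1 ^ 2 - w) * τ) ^ 2 ≤ j ∧
    4 * κ * ((σ1 ^ 2 - w) * τ) * τ * √w ≤ j ∧
    (4 * κ * ((σ1 ^ 2 - w) * τ) * τ) ^ 2 * w ≤ j * (κ * ((σ1 ^ 2 - w) * τ) ^ 2) ∧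
    |κ * (2 * ((σ1 ^ 2 - w) * τ) * (σ1 ^ 2 - w))| ≤ j ∧
    |κ * (2 * (4 * w * τ ^ 2 - 2 * n * ((σ1 ^ 2 - w) * τ) * τ))| ≤ j := by
  obtain ⟨D, hD⟩ : ∃ D, D = σ1 ^ 2 - w := ⟨_, rfl⟩
  rw [← hD]
  have hD0 : 0 < D := by linarith
  have hD1 : D ≤ 1 := by linarith
  have hw1 : w ≤ 1 := by linarith
  have hξ0 : 0 < D * τ := by positivity
  have hξ : D * τ ≤ θ := by nlinarith
  obtain ⟨ξ, hξd⟩ : ∃ ξ, ξ = D * τ := ⟨_, rfl⟩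
  rw [← hξd] at hξ0 hξ ⊢
  have hsw : √w ≤ 1 := by rw [Real.sqrt_le_one]; exact hw1
  have hsw0 : 0 ≤ √w := Real.sqrt_nonneg w
  have hξτ : ξ * τ ≤ θ ^ 2 := by nlinarith
  have hξ2 : ξ ^ 2 ≤ θ ^ 2 := by nlinarith
  have hτ2 : τ ^ 2 ≤ θ ^ 2 := by nlinarith
  have big : ∀ z, z ≤ (16 + 4 * n) * (θ + θ ^ 2) → κ * z ≤ j := by
    intro z hz
    have := mul_le_mul_of_nonneg_left hz hκ.le
    linarith
  have hnθ : 0 ≤ n * θ := by positivity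
  have hnθ2 : 0 ≤ n * θ ^ 2 := by positivity
  have hθ2 : 0 ≤ θ ^ 2 := by positivity
  have hnξ : n * (ξ * τ) ≤ n * θ ^ 2 := by gcongr
  have hnξ0 : 0 ≤ n * (ξ * τ) := by positivity
  have hwτ : w * τ ^ 2 ≤ θ ^ 2 := by nlinarith [sq_nonneg τ]
  have hwτ0 : 0 ≤ w * τ ^ 2 := by positivity
  refine ⟨big _ (by linarith), ?_, ?_, ?_, ?_⟩
  · have : ξ * τ * √w ≤ θ ^ 2 := by nlinarith [mul_pos hξ0 hτ0]
    have := big (4 * (ξ * τ * √w)) (by linarith)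
    linarith
  · have h := big (16 * (w * τ ^ 2)) (by linarith)
    have : (4 * κ * ξ * τ) ^ 2 * w = (κ * (16 * (w * τ ^ 2))) * (κ * ξ ^ 2) := by ring
    rw [this]
    exact mul_le_mul_of_nonneg_right h (by positivity)
  · rw [abs_of_nonneg (by positivity)]
    apply big; nlinarith
  · rw [abs_mul, abs_of_pos hκ]
    apply big
    rw [abs_le]
    constructor <;> linarith

lemma J2.congr {f g : ℝ → ℝ} {f1 f2 g1 g2 : ℝ} (h : J2 f f1 f2) (h0 : f = g) (h1 : f1 = g1)
    (h2 : f2 = g2) : J2 g g1 g2 := by subst h0 h1 h2; exact h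

lemma sum_inner_sq {n : ℕ} (A : EuclideanSpace ℝ (Fin n)) :
    ∑ i : Fin n, ⟪A, EuclideanSpace.single i (1 : ℝ)⟫ ^ 2 = ‖A‖ ^ 2 := by
  have := (EuclideanSpace.basisFun (Fin n) ℝ).sum_sq_norm_inner_left A
  simpa using this

lemma deriv_nonneg_of_left {h : ℝ → ℝ} {h' t t1 : ℝ} (ht : t1 < t) (hd : HasDerivAt h h' t)
    (hm : ∀ s ∈ Icc t1 t, h s ≤ h t) : 0 ≤ h' := by
  by_contra hlt
  push Not at hlt
  have h1 := (hasDerivAt_iff_tendsto_slope.1 hd).eventually (gt_mem_nhds hlt)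
  have h3 : ∀ᶠ s in nhdsWithin t (Iio t), slope h t s < 0 :=
    h1.filter_mono (nhdsWithin_mono _ (fun s hs => ne_of_lt hs))
  have h4 : ∀ᶠ s in nhdsWithin t (Iio t), s ∈ Ioo t1 t := Ioo_mem_nhdsLT ht
  obtain ⟨s, hs1, hs2⟩ := (h3.and h4).exists
  have := hm s ⟨hs2.1.le, hs2.2.le⟩
  simp only [slope, vsub_eq_sub, smul_eq_mul] at hs1
  have h5 : (s - t)⁻¹ ≤ 0 := inv_nonpos.2 (by linarith [hs2.2])
  nlinarith

set_option maxHeartbeats 2000000 in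
lemma barrier {n : ℕ} {p β k1 c q γ ι j L κ θ σ1 Y0 t1 t2 : ℝ} (hp : 0 < p)
    (hβ0 : 0 < β) (hβ1 : β < 1) (hβp : β * p = β + 1) (hq : q = 1 - β) (hγ : γ = q⁻¹)
    (hcq : c * q = k1) (hk1 : 0 < k1) (hι0 : 0 < ι) (hι1 : ι < 1)
    (hι : 0 < k1 * β * (1 - ι) ^ 2 - (k1 * (1 + ι) + ι) ^ p - 3 * ι)
    (hκ : 0 < κ) (hθ : 0 < θ) (hκj : κ * (16 + 4 * n) * (θ + θ ^ 2) ≤ j) (hj1 : j ≤ 1)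
    (hγj : γ * γ * j ≤ ι) (hcj : c * j ≤ ι) (hσ10 : 0 < σ1) (hσ1 : σ1 ≤ 1)
    (hY : σ1 + j ≤ Y0) (hY1 : Y0 ≤ 1) (hYL : k1 * Y0 * (L + 2) ≤ ι) (hL : 0 < L)
    (ht12 : t2 - t1 ≤ θ)
    {ω W : Set (EuclideanSpace ℝ (Fin n))} {a : EuclideanSpace ℝ (Fin n)} (hω : IsOpen ω)
    (hW : IsOpen W) (hωW : ω ∩ closedBall a σ1 ⊆ W)
    {δ : EuclideanSpace ℝ (Fin n) → ℝ} (hδc : Continuous δ) (hδ0 : ∀ x ∈ frontier ω, δ x = 0)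
    (hδpos : ∀ x ∈ ω, 0 < δ x) (hδle : ∀ x, δ x ≤ dist x a) (hδ2 : ContDiffOn ℝ 2 δ W)
    (hδg : ∀ x ∈ W, ∃ ν : EuclideanSpace ℝ (Fin n), ‖ν‖ = 1 ∧ ∀ e, fderiv ℝ δ x e = ⟪ν, e⟫)
    (hδL : ∀ x ∈ W, |∑ i : Fin n, fderiv ℝ (fun y => fderiv ℝ δ y (EuclideanSpace.single i (1 : ℝ))) x
        (EuclideanSpace.single i (1 : ℝ))| ≤ L)
    {v : EuclideanSpace ℝ (Fin n) → ℝ → ℝ}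
    {G : EuclideanSpace ℝ (Fin n) → ℝ → EuclideanSpace ℝ (Fin n)}
    {H : EuclideanSpace ℝ (Fin n) → ℝ → (EuclideanSpace ℝ (Fin n) →L[ℝ] EuclideanSpace ℝ (Fin n))}
    {v' : EuclideanSpace ℝ (Fin n) → ℝ → ℝ}
    (hG : ∀ t ∈ Icc t1 t2, ∀ x ∈ W, HasGradientAt (fun y => v y t) (G x t) x)
    (hH : ∀ t ∈ Icc t1 t2, ∀ x ∈ W, HasFDerivAt (fun y => G y t) (H x t) x)
    (hv' : ∀ t ∈ Icc t1 t2, ∀ x ∈ W, HasDerivAt (fun s => v x s) (v' x t) t)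
    (hpde : ∀ t ∈ Icc t1 t2, ∀ x ∈ W, v' x t - tr (H x t) ≤ ‖G x t‖ ^ p)
    (hvc : ContinuousOn (fun z : EuclideanSpace ℝ (Fin n) × ℝ => v z.1 z.2)
      ((closure ω ∩ closedBall a σ1) ×ˢ Icc t1 t2))
    (hv0 : ∀ t ∈ Icc t1 t2, ∀ x ∈ frontier ω ∩ closedBall a σ1, v x t ≤ 0)
    (hvq : ∀ t ∈ Icc t1 t2, ∀ x ∈ ω ∩ closedBall a σ1, v x t ≤ c * δ x ^ q) :
    ∀ t ∈ Icc t1 t2, ∀ x ∈ ω ∩ closedBall a σ1,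
      v x t ≤ c * ((δ x + (κ * ((σ1 ^ 2 - ‖x - a‖ ^ 2) * (t - t1)) ^ 2) ^ γ) ^ q
        - κ * ((σ1 ^ 2 - ‖x - a‖ ^ 2) * (t - t1)) ^ 2) := by
  have hq0 : 0 < q := by linarith
  have hq1 : q < 1 := by linarith
  have hγ1 : 1 < γ := by rw [hγ]; exact (one_lt_inv₀ hq0).2 hq1
  have hγ0 : 0 < γ := by linarith
  have hγq : γ * q = 1 := by rw [hγ]; field_simp
  have hc0 : 0 < c := by
    by_contra h; push Not at h; nlinarith
  set P : EuclideanSpace ℝ (Fin n) → ℝ → ℝ :=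
    fun x t => κ * ((σ1 ^ 2 - ‖x - a‖ ^ 2) * (t - t1)) ^ 2 with hP
  have hP0 : ∀ x t, 0 ≤ P x t := fun x t => by simp only [hP]; positivity
  set U : EuclideanSpace ℝ (Fin n) → ℝ → ℝ := fun x t => c * ((δ x + P x t ^ γ) ^ q - P x t) with hU
  change ∀ t ∈ Icc t1 t2, ∀ x ∈ ω ∩ closedBall a σ1, v x t ≤ U x t
  have hPc : Continuous (fun z : EuclideanSpace ℝ (Fin n) × ℝ => P z.1 z.2) := by
    simp only [hP]; fun_prop
  have hUc : Continuous (fun z : EuclideanSpace ℝ (Fin n) × ℝ => U z.1 z.2) := by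
    simp only [hU]
    refine continuous_const.mul (Continuous.sub ?_ hPc)
    refine Continuous.rpow_const ?_ (fun _ => Or.inr hq0.le)
    exact (hδc.comp continuous_fst).add (hPc.rpow_const (fun _ => Or.inr hγ0.le))
  intro t₀ ht₀ x₀ hx₀
  have hcomp : IsCompact ((closure ω ∩ closedBall a σ1) ×ˢ Icc t1 t2) :=
    ((isCompact_closedBall a σ1).inter_left isClosed_closure).prod isCompact_Icc
  have hx₀S : (x₀, t₀) ∈ (closure ω ∩ closedBall a σ1) ×ˢ Icc t1 t2 :=
    ⟨⟨subset_closure hx₀.1, hx₀.2⟩, ht₀⟩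
  obtain ⟨⟨x, t⟩, ⟨hx, ht⟩, hmax⟩ := hcomp.exists_isMaxOn ⟨_, hx₀S⟩ (hvc.sub hUc.continuousOn)
  have hmax' : ∀ y s, y ∈ closure ω ∩ closedBall a σ1 → s ∈ Icc t1 t2 →
      v y s - U y s ≤ v x t - U x t := fun y s hy hs => hmax (show (y, s) ∈ _ from ⟨hy, hs⟩)
  simp only at hx ht
  suffices hle : v x t - U x t ≤ 0 by
    have := hmax' x₀ t₀ hx₀S.1 hx₀S.2
    linarith
  by_contra hpos
  push Not at hpos
  have hxω : x ∈ ω := by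
    by_contra hnot
    have hfr : x ∈ frontier ω := by rw [hω.frontier_eq]; exact ⟨hx.1, hnot⟩
    have h1 := hv0 t ht x ⟨hfr, hx.2⟩
    have h2 : U x t = 0 := by
      simp only [hU]
      rw [hδ0 x hfr, zero_add, ← Real.rpow_mul (hP0 x t), hγq, Real.rpow_one, sub_self, mul_zero]
    linarith
  have hxW : x ∈ W := hωW ⟨hxω, hx.2⟩
  have hPpos : 0 < P x t := by
    rcases (hP0 x t).eq_or_lt with h0 | h0
    · exfalso
      have h1 := hvq t ht x ⟨hxω, hx.2⟩
      have h2 : U x t = c * δ x ^ q := by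
        simp only [hU]
        rw [← h0, Real.zero_rpow hγ0.ne', add_zero, sub_zero]
      linarith
    · exact h0
  obtain ⟨ξ, hξ⟩ : ∃ ξ, ξ = (σ1 ^ 2 - ‖x - a‖ ^ 2) * (t - t1) := ⟨_, rfl⟩
  have hPξ : P x t = κ * ξ ^ 2 := by rw [hξ]
  have hξne : ξ ≠ 0 := by
    intro h; rw [hPξ, h] at hPpos; simp at hPpos
  have hdist : ‖x - a‖ ≤ σ1 := by simpa [dist_eq_norm] using hx.2
  have hdlt : ‖x - a‖ < σ1 := by
    rcases hdist.eq_or_lt with h | h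
    · exfalso; apply hξne; rw [hξ, h]; simp
    · exact h
  have htlt : t1 < t := by
    rcases ht.1.eq_or_lt with h | h
    · exfalso; apply hξne; rw [hξ, h]; simp
    · exact h
  obtain ⟨τ, hτ⟩ : ∃ τ, τ = t - t1 := ⟨_, rfl⟩
  have hτ0 : 0 < τ := by linarith
  have hτθ : τ ≤ θ := by linarith [ht.2]
  have hw : ‖x - a‖ ^ 2 < σ1 ^ 2 := by nlinarith [norm_nonneg (x - a)]
  obtain ⟨b1, b2, b3, b4, b5⟩ := P_bounds (n := n) hκ (Nat.cast_nonneg n) hθ (by nlinarith)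
    (sq_nonneg ‖x - a‖) hw hτ0 hτθ hκj
  rw [hτ, ← hξ] at b1 b2 b3 b4 b5
  rw [← hτ] at b2 b3 b5
  rw [Real.sqrt_sq (norm_nonneg _)] at b2
  rw [← hPξ] at b1 b3
  have hξ0 : 0 < ξ := by rw [hξ, ← hτ]; exact mul_pos (by linarith) hτ0
  have hj0 : 0 < j := lt_of_lt_of_le hPpos b1
  -- local max
  have hnhds : ∀ᶠ y in nhds x, v y t - U y t ≤ v x t - U x t := by
    have : ω ∩ ball a σ1 ∈ nhds x := (hω.inter isOpen_ball).mem_nhds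
      ⟨hxω, by simpa [dist_eq_norm] using hdlt⟩
    filter_upwards [this] with y hy
    exact hmax' y t ⟨subset_closure hy.1, ball_subset_closedBall hy.2⟩ ht
  obtain ⟨ν, hν1, hνe⟩ := hδg x hxW
  obtain ⟨gP, hgP⟩ : ∃ gP, gP = (-(4 * κ * ξ * τ)) • (x - a) := ⟨_, rfl⟩
  obtain ⟨Y, hYd⟩ : ∃ Y, Y = δ x + P x t ^ γ := ⟨_, rfl⟩
  have hδx := hδpos x hxω
  have hρ0 : 0 < P x t ^ γ := Real.rpow_pos_of_pos hPpos _
  have hY0 : 0 < Y := by rw [hYd]; positivity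
  obtain ⟨A, hA⟩ : ∃ A, A = ν + (γ * P x t ^ (γ - 1)) • gP := ⟨_, rfl⟩
  obtain ⟨D2, hD2⟩ : ∃ D2 : EuclideanSpace ℝ (Fin n) → ℝ,
    D2 = fun e => fderiv ℝ (fun y => fderiv ℝ δ y e) x e := ⟨_, rfl⟩
  obtain ⟨P2, hP2⟩ : ∃ P2 : EuclideanSpace ℝ (Fin n) → ℝ,
    P2 = fun e => κ * (2 * (4 * ⟪x - a, e⟫ ^ 2 * τ ^ 2 - 2 * ξ * τ * ‖e‖ ^ 2)) := ⟨_, rfl⟩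
  have hline : ∀ e : EuclideanSpace ℝ (Fin n),
      ⟪G x t, e⟫ - c * (q * Y ^ (q - 1) * ⟪A, e⟫ - ⟪gP, e⟫) = 0 ∧
      ⟪H x t e, e⟫ - c * (q * (q - 1) * Y ^ (q - 2) * ⟪A, e⟫ ^ 2 +
        q * Y ^ (q - 1) * (D2 e + (γ * (γ - 1) * P x t ^ (γ - 2) * ⟪gP, e⟫ ^ 2
          + γ * P x t ^ (γ - 1) * P2 e)) - P2 e) ≤ 0 := by
    intro e
    have jv := J2.line (Filter.mem_of_superset (hW.mem_nhds hxW) (hG t ht)) (hH t ht x hxW) e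
    have jδ := J2.line' hW hxW hδ2 e
    have jξ : J2 (fun s : ℝ => (σ1 ^ 2 - ‖x + s • e - a‖ ^ 2) * (t - t1)) (-2 * ⟪x - a, e⟫ * τ)
        (2 * (- ‖e‖ ^ 2 * τ)) := by
      refine (J2.poly ξ (-2 * ⟪x - a, e⟫ * τ) (- ‖e‖ ^ 2 * τ)).congr ?_ rfl rfl
      funext s
      rw [show x + s • e - a = (x - a) + s • e by abel, norm_add_sq_real, norm_smul,
        inner_smul_right, mul_pow, Real.norm_eq_abs, sq_abs, hξ, hτ]
      ring
    have jP : J2 (fun s : ℝ => P (x + s • e) t) ⟪gP, e⟫ (P2 e) := by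
      refine (jξ.sq.const_mul κ).congr rfl ?_ ?_
      · simp only [zero_smul, add_zero, ← hξ, hgP, inner_smul_left, conj_trivial]
        ring
      · simp only [zero_smul, add_zero, ← hξ, hP2]
        ring
    have jρ := jP.rpow (by simpa using hPpos) γ
    have jY := ((jδ.add jρ).rpow (by simpa [← hYd] using hY0) q)
    have j := jv.sub ((jY.sub jP).const_mul c)
    have hm : IsLocalMax (fun s : ℝ => v (x + s • e) t - U (x + s • e) t) 0 := by
      have hc : Tendsto (fun s : ℝ => x + s • e) (nhds 0) (nhds x) := by
        have : Continuous (fun s : ℝ => x + s • e) := by fun_prop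
        simpa using this.tendsto 0
      have := hc.eventually hnhds
      simpa [IsLocalMax, IsMaxFilter] using this
    have := j.max hm
    simp only [zero_smul, add_zero, ← hYd, hνe] at this
    have hAe : ⟪A, e⟫ = ⟪ν, e⟫ + γ * P x t ^ (γ - 1) * ⟪gP, e⟫ := by
      rw [hA, inner_add_left, inner_smul_left]; rfl
    rw [hAe, hD2]
    exact this
  -- the gradient
  have hGeq : G x t = (c * q * Y ^ (q - 1)) • A - c • gP := by
    refine ext_inner_right ℝ fun e => ?_
    rw [inner_sub_left, inner_smul_left, inner_smul_left]
    simp only [conj_trivial]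
    linarith [(hline e).1]
  -- the Laplacian
  have hgPn : ‖gP‖ ≤ j := by
    rw [hgP, norm_smul, norm_neg, Real.norm_eq_abs, abs_of_nonneg (by positivity)]
    exact b2
  have hgP2 : ‖gP‖ ^ 2 ≤ j * P x t := by
    rw [hgP, norm_smul, norm_neg, Real.norm_eq_abs, mul_pow, sq_abs]
    exact b3
  have hsum := Finset.sum_nonpos (s := Finset.univ)
    (fun i _ => (hline (EuclideanSpace.single i (1 : ℝ))).2)
  obtain ⟨SD, hSD⟩ : ∃ SD, SD = ∑ i : Fin n, D2 (EuclideanSpace.single i (1 : ℝ)) := ⟨_, rfl⟩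
  obtain ⟨SP, hSP⟩ : ∃ SP, SP = ∑ i : Fin n, P2 (EuclideanSpace.single i (1 : ℝ)) := ⟨_, rfl⟩
  have hSDL : |SD| ≤ L := by rw [hSD, hD2]; exact hδL x hxW
  have hSPj : |SP| ≤ j := by
    have : SP = κ * (2 * (4 * ‖x - a‖ ^ 2 * τ ^ 2 - 2 * n * ξ * τ)) := by
      rw [hSP, hP2]
      simp only [← Finset.mul_sum, Finset.sum_sub_distrib, ← Finset.sum_mul, sum_inner_sq,
        EuclideanSpace.norm_single, norm_one, one_pow, mul_one, Finset.sum_const,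
        Finset.card_univ, Fintype.card_fin, nsmul_eq_mul]
      ring
    rw [this]; exact b5
  have hlap : tr (H x t) ≤ c * (q * (q - 1) * Y ^ (q - 2) * ‖A‖ ^ 2 +
        q * Y ^ (q - 1) * (SD + (γ * (γ - 1) * P x t ^ (γ - 2) * ‖gP‖ ^ 2
          + γ * P x t ^ (γ - 1) * SP)) - SP) := by
    have e : ∑ i : Fin n, (⟪H x t (EuclideanSpace.single i (1 : ℝ)), EuclideanSpace.single i (1 : ℝ)⟫
       - c * (q * (q - 1) * Y ^ (q - 2) * ⟪A, EuclideanSpace.single i (1 : ℝ)⟫ ^ 2 +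
        q * Y ^ (q - 1) * (D2 (EuclideanSpace.single i (1 : ℝ)) + (γ * (γ - 1) * P x t ^ (γ - 2) * ⟪gP, EuclideanSpace.single i (1 : ℝ)⟫ ^ 2
          + γ * P x t ^ (γ - 1) * P2 (EuclideanSpace.single i (1 : ℝ)))) - P2 (EuclideanSpace.single i (1 : ℝ)))) =
      tr (H x t) - c * (q * (q - 1) * Y ^ (q - 2) * ‖A‖ ^ 2 +
        q * Y ^ (q - 1) * (SD + (γ * (γ - 1) * P x t ^ (γ - 2) * ‖gP‖ ^ 2
          + γ * P x t ^ (γ - 1) * SP)) - SP) := by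
      rw [← sum_inner_sq A, ← sum_inner_sq gP, hSD, hSP, tr]
      simp only [Finset.sum_sub_distrib, ← Finset.mul_sum, Finset.sum_add_distrib]
    rw [e] at hsum
    linarith
  -- time derivative
  obtain ⟨Pt, hPt⟩ : ∃ Pt, Pt = κ * (2 * ξ * (σ1 ^ 2 - ‖x - a‖ ^ 2)) := ⟨_, rfl⟩
  rw [← hPt] at b4
  have htime : c * (q * Y ^ (q - 1) * (γ * P x t ^ (γ - 1) * Pt) - Pt) ≤ v' x t := by
    have dP : HasDerivAt (fun s => P x s) Pt t := by
      have h1 : HasDerivAt (fun s => (σ1 ^ 2 - ‖x - a‖ ^ 2) * (s - t1)) (σ1 ^ 2 - ‖x - a‖ ^ 2) t := by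
        simpa using ((hasDerivAt_id t).sub_const t1).const_mul (σ1 ^ 2 - ‖x - a‖ ^ 2)
      refine ((h1.pow 2).const_mul κ).congr_deriv ?_
      rw [hPt, ← hξ]; simp
    have dρ := dP.rpow_const (p := γ) (Or.inl hPpos.ne')
    have dY := (dρ.const_add (δ x)).rpow_const (p := q) (Or.inl (by rw [← hYd]; exact hY0.ne'))
    have d := (hv' t ht x hxW).sub ((dY.sub dP).const_mul c)
    have := deriv_nonneg_of_left htlt d (fun s hs => hmax' x s hx ⟨hs.1, hs.2.trans ht.2⟩)
    rw [← hYd] at this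
    linarith
  -- bounds
  have hPle1 : P x t ≤ 1 := b1.trans hj1
  have hPg1 : P x t ^ (γ - 1) ≤ 1 := Real.rpow_le_one (hP0 x t) hPle1 (by linarith)
  have hPg0 : 0 ≤ P x t ^ (γ - 1) := Real.rpow_nonneg (hP0 x t) _
  have hργ : P x t ^ γ ≤ j := by
    calc P x t ^ γ ≤ P x t ^ (1:ℝ) := Real.rpow_le_rpow_of_exponent_ge hPpos hPle1 hγ1.le
      _ ≤ j := by rw [Real.rpow_one]; exact b1
  have hYY0 : Y ≤ Y0 := by
    have := hδle x
    rw [dist_eq_norm] at this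
    rw [hYd]; linarith
  have hγj' : γ * j ≤ ι := by
    have : γ * j ≤ γ * γ * j := by nlinarith [mul_pos hγ0 hj0]
    linarith
  have hsmall : ∀ z, |z| ≤ j → |γ * P x t ^ (γ - 1) * z| ≤ γ * j := by
    intro z hz
    rw [abs_mul, abs_of_nonneg (by positivity)]
    calc γ * P x t ^ (γ - 1) * |z| ≤ γ * 1 * j := by gcongr
      _ = γ * j := by ring
  have hgr : ‖(γ * P x t ^ (γ - 1)) • gP‖ ≤ ι := by
    rw [norm_smul, Real.norm_eq_abs, ← abs_of_nonneg (norm_nonneg gP), ← abs_mul]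
    exact (hsmall _ (by rw [abs_of_nonneg (norm_nonneg _)]; exact hgPn)).trans hγj'
  have hA1 : 1 - ι ≤ ‖A‖ := by
    rw [hA]
    have := norm_sub_le_norm_add ν ((γ * P x t ^ (γ - 1)) • gP)
    linarith
  have hA2 : ‖A‖ ≤ 1 + ι := by
    rw [hA]
    have := norm_add_le ν ((γ * P x t ^ (γ - 1)) • gP)
    linarith
  have hrr : |γ * (γ - 1) * P x t ^ (γ - 2) * ‖gP‖ ^ 2 + γ * P x t ^ (γ - 1) * SP| ≤ ι := by
    have h1 : |γ * (γ - 1) * P x t ^ (γ - 2) * ‖gP‖ ^ 2| ≤ γ * (γ - 1) * j := by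
      have hp2 : 0 ≤ P x t ^ (γ - 2) := Real.rpow_nonneg (hP0 x t) _
      have hγm : 0 ≤ γ - 1 := by linarith
      rw [abs_of_nonneg (by positivity)]
      have e : P x t ^ (γ - 2) * P x t = P x t ^ (γ - 1) := by
        rw [← Real.rpow_add_one hPpos.ne']; congr 1; ring
      calc γ * (γ - 1) * P x t ^ (γ - 2) * ‖gP‖ ^ 2 ≤ γ * (γ - 1) * P x t ^ (γ - 2) * (j * P x t) := by
            gcongr
        _ = γ * (γ - 1) * j * P x t ^ (γ - 1) := by rw [← e]; ring
        _ ≤ γ * (γ - 1) * j * 1 := by gcongr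
        _ = _ := by ring
    have h2 := hsmall SP hSPj
    calc _ ≤ _ := abs_add_le _ _
      _ ≤ γ * (γ - 1) * j + γ * j := add_le_add h1 h2
      _ = γ * γ * j := by ring
      _ ≤ ι := hγj
  have hYL' : k1 * Y * (L + 2) ≤ ι := by
    refine le_trans ?_ hYL
    gcongr
  have hgnorm : ‖G x t‖ ≤ k1 * Y ^ (-β) * (1 + ι) + ι := by
    rw [hGeq, hcq, show q - 1 = -β by linarith]
    have hYb : 0 ≤ Y ^ (-β) := Real.rpow_nonneg hY0.le _
    calc _ ≤ ‖(k1 * Y ^ (-β)) • A‖ + ‖c • gP‖ := norm_sub_le _ _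
      _ = k1 * Y ^ (-β) * ‖A‖ + c * ‖gP‖ := by
          rw [norm_smul, norm_smul, Real.norm_eq_abs, Real.norm_eq_abs, abs_of_nonneg (by positivity),
            abs_of_pos hc0]
      _ ≤ k1 * Y ^ (-β) * (1 + ι) + c * j := by gcongr
      _ ≤ _ := by linarith
  have hcabs : ∀ z, |z| ≤ j → |c * z| ≤ ι := by
    intro z hz
    rw [abs_mul, abs_of_pos hc0]
    exact (mul_le_mul_of_nonneg_left hz hc0.le).trans hcj
  have hstrict := strict_ineq hY0 (hYY0.trans hY1) hk1 hι0 hι1 hYL' hβ0 hp hβp hι hA1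
    (norm_nonneg (G x t)) hgnorm hSDL hrr ((hsmall Pt b4).trans hγj') (hcabs SP hSPj) (hcabs Pt b4)
  have hp1 := hpde t ht x hxW
  have e1 : q - 1 = -β := by linarith
  have e2 : q - 2 = -β - 1 := by linarith
  rw [e1] at htime hlap
  rw [e2] at hlap
  have e3 : c * (q * -β * Y ^ (-β - 1) * ‖A‖ ^ 2 +
        q * Y ^ (-β) * (SD + (γ * (γ - 1) * P x t ^ (γ - 2) * ‖gP‖ ^ 2
          + γ * P x t ^ (γ - 1) * SP)) - SP) =
      k1 * Y ^ (-β) * (SD + (γ * (γ - 1) * P x t ^ (γ - 2) * ‖gP‖ ^ 2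
          + γ * P x t ^ (γ - 1) * SP)) - k1 * β * Y ^ (-β - 1) * ‖A‖ ^ 2 - c * SP := by
    rw [← hcq]; ring
  have e4 : c * (q * Y ^ (-β) * (γ * P x t ^ (γ - 1) * Pt) - Pt) =
      k1 * Y ^ (-β) * (γ * P x t ^ (γ - 1) * Pt) - c * Pt := by
    rw [← hcq]; ring
  rw [e3] at hlap
  rw [e4] at htime
  linarith

lemma ode_cmp {g g' : ℝ → ℝ} {r k1 β : ℝ} (hgc : ContinuousOn g (Ioc 0 r))
    (hg : ∀ s ∈ Ioo 0 r, HasDerivAt g (g' s) s) (hgr : g r < k1 * r ^ (-β))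
    (hb : ∀ s ∈ Ioo 0 r, g s = k1 * s ^ (-β) → -(β * k1 * s ^ (-β - 1)) < g' s) :
    ∀ s ∈ Ioo 0 r, g s ≤ k1 * s ^ (-β) := by
  intro s0 hs0
  have hr : 0 < r := hs0.1.trans hs0.2
  obtain ⟨r', hr', hr'g⟩ : ∃ r' ∈ Ioo s0 r, g r' < k1 * r' ^ (-β) := by
    have h1 : ContinuousWithinAt (fun s => k1 * s ^ (-β) - g s) (Ioo 0 r) r := by
      apply ContinuousWithinAt.sub
      · exact ((Real.continuousAt_rpow_const r (-β) (Or.inl hr.ne')).const_mul k1).continuousWithinAt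
      · exact (hgc r ⟨hr, le_rfl⟩).mono Ioo_subset_Ioc_self
    have h2 : ∀ᶠ s in nhdsWithin r (Ioo 0 r), 0 < k1 * s ^ (-β) - g s :=
      h1.eventually (lt_mem_nhds (by linarith))
    rw [nhdsWithin_Ioo_eq_nhdsLT hr] at h2
    obtain ⟨s, h3, h4⟩ := (h2.and (Ioo_mem_nhdsLT hs0.2)).exists
    exact ⟨s, h4, by linarith⟩
  have key := image_le_of_deriv_right_lt_deriv_boundary' (f := fun x => g (-x))
    (f' := fun x => - g' (-x)) (a := -r') (b := -s0) (B := fun x => k1 * (-x) ^ (-β))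
    (B' := fun x => β * k1 * (-x) ^ (-β - 1)) ?_ ?_ ?_ ?_ ?_ ?_
  · have := @key (-s0) ⟨by linarith [hr'.1], le_rfl⟩
    simpa using this
  · refine hgc.comp continuous_neg.continuousOn ?_
    intro x hx
    exact ⟨by linarith [hx.2, hs0.1], by linarith [hx.1, hr'.2]⟩
  · intro x hx
    have hx' : -x ∈ Ioo 0 r := ⟨by linarith [hx.2, hs0.1], by linarith [hx.1, hr'.2]⟩
    have := (hg (-x) hx').comp x (hasDerivAt_neg x)
    exact (this.congr_deriv (by ring)).hasDerivWithinAt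
  · simpa using hr'g.le
  · intro x hx
    have hx' : 0 < -x := by linarith [hx.2, hs0.1]
    have : ContinuousAt (fun x : ℝ => (-x) ^ (-β)) x :=
      (Real.continuousAt_rpow_const (-x) (-β) (Or.inl hx'.ne')).comp (f := fun x : ℝ => -x)
        continuous_neg.continuousAt
    exact (this.const_mul k1).continuousWithinAt
  · intro x hx
    have hx' : 0 < -x := by linarith [hx.2, hs0.1]
    have := ((hasDerivAt_neg x).rpow_const (p := -β) (Or.inl hx'.ne')).const_mul k1
    exact (this.congr_deriv (by ring)).hasDerivWithinAt
  · intro x hx h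
    have hx' : -x ∈ Ioo 0 r := ⟨by linarith [hx.2, hs0.1], by linarith [hx.1, hr'.2]⟩
    have := hb (-x) hx' h
    linarith

lemma int_cmp {w g : ℝ → ℝ} {r k1 β c q : ℝ} (hq : q = 1 - β) (hq0 : 0 < q) (hcq : c * q = k1)
    (hwc : ContinuousOn w (Ico 0 r)) (hw0 : w 0 = 0)
    (hw : ∀ s ∈ Ioo 0 r, HasDerivAt w (g s) s) (hg : ∀ s ∈ Ioo 0 r, g s ≤ k1 * s ^ (-β)) :
    ∀ s ∈ Ioo 0 r, w s ≤ c * s ^ q := by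
  intro s hs
  have hd : ∀ x ∈ Ioo 0 s, HasDerivAt (fun x => c * x ^ q - w x) (k1 * x ^ (-β) - g x) x := by
    intro x hx
    have h1 := ((hasDerivAt_id x).rpow_const (p := q) (Or.inl hx.1.ne')).const_mul c
    have := h1.sub (hw x ⟨hx.1, hx.2.trans hs.2⟩)
    refine this.congr_deriv ?_
    rw [← hcq, show q - 1 = -β by linarith]; simp; ring
  have hm : MonotoneOn (fun x => c * x ^ q - w x) (Icc 0 s) := by
    apply monotoneOn_of_deriv_nonneg (convex_Icc 0 s)
    · apply ContinuousOn.sub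
      · exact ((Real.continuous_rpow_const hq0.le).const_mul c).continuousOn
      · exact hwc.mono (fun x hx => ⟨hx.1, hx.2.trans_lt hs.2⟩)
    · intro x hx
      rw [interior_Icc] at hx
      exact (hd x hx).differentiableAt.differentiableWithinAt
    · intro x hx
      rw [interior_Icc] at hx
      rw [(hd x hx).deriv]
      linarith [hg x ⟨hx.1, hx.2.trans hs.2⟩]
  have := hm (left_mem_Icc.2 hs.1.le) (right_mem_Icc.2 hs.1.le) hs.1.le
  simp only [Real.zero_rpow hq0.ne', hw0, mul_zero, sub_zero] at this
  linarith

lemma ray {n : ℕ} (hn : 1 ≤ n) {p β k1 c q ζ r : ℝ} (hp : 1 < p) (hβp : β * p = β + 1)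
    (hq : q = 1 - β) (hq0 : 0 < q) (hcq : c * q = k1) (hk1 : 0 < k1) (hζ0 : 0 < ζ) (hζ1 : ζ < 1)
    (hζ : (k1 + ζ) ^ p + (n + 1) * ζ < β * k1)
    {G : ℝ → EuclideanSpace ℝ (Fin n)}
    {H : ℝ → (EuclideanSpace ℝ (Fin n) →L[ℝ] EuclideanSpace ℝ (Fin n))} {w w' : ℝ → ℝ}
    {ν : EuclideanSpace ℝ (Fin n)} (hν : ‖ν‖ = 1)
    (hGc : ContinuousOn G (Ioc 0 r)) (hG : ∀ s ∈ Ioo 0 r, HasDerivAt G (H s ν) s)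
    (hwc : ContinuousOn w (Ico 0 r)) (hw0 : w 0 = 0)
    (hw : ∀ s ∈ Ioo 0 r, HasDerivAt w ⟪G s, ν⟫ s)
    (hpde : ∀ s ∈ Ioo 0 r, w' s - tr (H s) = ‖G s‖ ^ p)
    (hw' : ∀ s ∈ Ioo 0 r, |w' s| ≤ ζ * s ^ (-(β * p)))
    (htan : ∀ s ∈ Ioo 0 r, ∀ τ, ‖τ‖ = 1 → ⟪τ, ν⟫ = 0 →
      |⟪G s, τ⟫| ^ p + |⟪H s τ, τ⟫| ≤ ζ ^ p * s ^ (-(β * p)))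
    (hend : |⟪G r, ν⟫| < k1 * r ^ (-β)) :
    ∀ s ∈ Ioo 0 r, |w s| ≤ c * s ^ q ∧ ‖G s‖ ≤ (k1 + ζ) * s ^ (-β) := by
  have hp0 : 0 < p := by linarith
  have hζp : ζ ^ p ≤ ζ := by
    have := Real.rpow_le_rpow_of_exponent_ge hζ0 hζ1.le hp.le
    simpa using this
  -- tangential part of the gradient
  have hGn : ∀ s ∈ Ioo 0 r, ‖G s‖ ≤ |⟪G s, ν⟫| + ζ * s ^ (-β) := by
    intro s hs
    have hsβ : 0 ≤ s ^ (-β) := Real.rpow_nonneg hs.1.le _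
    obtain ⟨y, hy⟩ : ∃ y, y = G s - ⟪G s, ν⟫ • ν := ⟨_, rfl⟩
    have hyν : ⟪y, ν⟫ = 0 := by
      rw [hy, inner_sub_left, inner_smul_left, real_inner_self_eq_norm_sq, hν]; simp
    have hGy : G s = ⟪G s, ν⟫ • ν + y := by rw [hy]; abel
    have hyn : ‖y‖ ≤ ζ * s ^ (-β) := by
      by_cases h0 : y = 0
      · rw [h0, norm_zero]; positivity
      have hyp : 0 < ‖y‖ := norm_pos_iff.2 h0
      have h1 := htan s hs (‖y‖⁻¹ • y) (by rw [norm_smul, norm_inv, norm_norm]; field_simp)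
        (by rw [inner_smul_left, hyν]; simp)
      have h2 : ⟪G s, ‖y‖⁻¹ • y⟫ = ‖y‖ := by
        rw [hGy, inner_add_left, inner_smul_right, inner_smul_left, real_inner_comm y ν, hyν,
          inner_smul_right, real_inner_self_eq_norm_sq]
        simp
        field_simp
      rw [h2, abs_of_pos hyp] at h1
      have h3 : ‖y‖ ^ p ≤ (ζ * s ^ (-β)) ^ p := by
        rw [Real.mul_rpow hζ0.le hsβ, ← Real.rpow_mul hs.1.le, neg_mul]
        linarith [abs_nonneg ⟪H s (‖y‖⁻¹ • y), ‖y‖⁻¹ • y⟫]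
      exact (Real.rpow_le_rpow_iff hyp.le (by positivity) hp0).1 h3
    calc ‖G s‖ = ‖⟪G s, ν⟫ • ν + y‖ := by rw [← hGy]
      _ ≤ ‖⟪G s, ν⟫ • ν‖ + ‖y‖ := norm_add_le _ _
      _ ≤ _ := by rw [norm_smul, hν, mul_one, Real.norm_eq_abs]; linarith
  have htr : ∀ s ∈ Ioo 0 r, |tr (H s) - ⟪H s ν, ν⟫| ≤ n * (ζ * s ^ (-(β * p))) := by
    intro s hs
    have hsβ : 0 ≤ s ^ (-(β * p)) := Real.rpow_nonneg hs.1.le _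
    refine tr_split (H s) ν hν hn _ (by positivity) fun τ h1 h2 => ?_
    have := htan s hs τ h1 h2
    have h3 : 0 ≤ |⟪G s, τ⟫| ^ p := Real.rpow_nonneg (abs_nonneg _) _
    have h4 : ζ ^ p * s ^ (-(β * p)) ≤ ζ * s ^ (-(β * p)) := by gcongr
    linarith
  have hgd : ∀ s ∈ Ioo 0 r, HasDerivAt (fun s => ⟪G s, ν⟫) ⟪H s ν, ν⟫ s := by
    intro s hs
    have := (hG s hs).inner ℝ (hasDerivAt_const s ν)
    exact this.congr_deriv (by simp)
  have hgc : ContinuousOn (fun s => ⟪G s, ν⟫) (Ioc 0 r) := hGc.inner continuousOn_const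
  have hGp : ∀ s ∈ Ioo 0 r, |⟪G s, ν⟫| = k1 * s ^ (-β) →
      ‖G s‖ ^ p ≤ (k1 + ζ) ^ p * s ^ (-(β * p)) := by
    intro s hs h
    have hsβ : 0 ≤ s ^ (-β) := Real.rpow_nonneg hs.1.le _
    rw [← neg_mul, Real.rpow_mul hs.1.le, ← Real.mul_rpow (by positivity) hsβ]
    apply Real.rpow_le_rpow (norm_nonneg _) _ hp0.le
    have := hGn s hs
    rw [h] at this
    linarith
  have up : ∀ s ∈ Ioo 0 r, ⟪G s, ν⟫ ≤ k1 * s ^ (-β) := by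
    refine ode_cmp hgc hgd ((le_abs_self _).trans_lt hend) fun s hs h => ?_
    have hZ : 0 < s ^ (-(β * p)) := Real.rpow_pos_of_pos hs.1 _
    have h1 := hGp s hs (by rw [h, abs_of_nonneg]; exact mul_nonneg hk1.le (Real.rpow_nonneg hs.1.le _))
    have h2 := abs_le.1 (htr s hs)
    have h3 := hpde s hs
    have h4 := abs_le.1 (hw' s hs)
    rw [show -β - 1 = -(β * p) by linarith]
    have h5 := mul_lt_mul_of_pos_right hζ hZ
    linarith [h2.1, h2.2, h4.1, h4.2]
  have down : ∀ s ∈ Ioo 0 r, -⟪G s, ν⟫ ≤ k1 * s ^ (-β) := by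
    refine ode_cmp (g := fun s => -⟪G s, ν⟫) (g' := fun s => -⟪H s ν, ν⟫) hgc.neg
      (fun s hs => (hgd s hs).neg) ((neg_le_abs _).trans_lt hend) fun s hs h => ?_
    have hZ : 0 < s ^ (-(β * p)) := Real.rpow_pos_of_pos hs.1 _
    have h1 : 0 ≤ ‖G s‖ ^ p := Real.rpow_nonneg (norm_nonneg _) _
    have h2 := abs_le.1 (htr s hs)
    have h3 := hpde s hs
    have h4 := abs_le.1 (hw' s hs)
    rw [show -β - 1 = -(β * p) by linarith]
    have h5 := mul_lt_mul_of_pos_right hζ hZ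
    have h6 : 0 ≤ (k1 + ζ) ^ p * s ^ (-(β * p)) := by positivity
    linarith [h2.1, h2.2, h4.1, h4.2]
  intro s hs
  refine ⟨abs_le'.2 ⟨int_cmp hq hq0 hcq hwc hw0 hw up s hs, ?_⟩, ?_⟩
  · exact int_cmp (w := fun s => - w s) (g := fun s => -⟪G s, ν⟫) hq hq0 hcq hwc.neg (by simp [hw0])
      (fun s hs => (hw s hs).neg) down s hs
  · have h1 : |⟪G s, ν⟫| ≤ k1 * s ^ (-β) := abs_le'.2 ⟨up s hs, down s hs⟩
    have := hGn s hs
    linarith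

lemma big_rpow (A : ℝ) {α : ℝ} (hα : 0 < α) : ∃ r₀ > (0:ℝ), ∀ s ∈ Ioc 0 r₀, A ≤ s ^ (-α) := by
  have h := (tendsto_rpow_neg_nhdsGT_zero (y := -α) (by linarith)).eventually_ge_atTop A
  obtain ⟨r, hr, h2⟩ := mem_nhdsGT_iff_exists_Ioc_subset.1 h
  exact ⟨r, hr, fun s hs => h2 hs⟩

lemma exists_small {f : ℝ → ℝ} (hf : ContinuousAt f 0) (h0 : 0 < f 0) : ∃ ζ ∈ Ioo (0:ℝ) 1, 0 < f ζ := by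
  have h1 : ∀ᶠ s in nhdsWithin (0:ℝ) (Ioi 0), 0 < f s :=
    (hf.eventually (lt_mem_nhds h0)).filter_mono nhdsWithin_le_nhds
  obtain ⟨s, h3, h4⟩ := (h1.and (Ioo_mem_nhdsGT (zero_lt_one))).exists
  exact ⟨s, h4, h3⟩

lemma exists_consts {p β k1 N : ℝ} (hk1 : 0 < k1) (h : k1 ^ p < β * k1) :
    (∃ ζ ∈ Ioo (0:ℝ) 1, (k1 + ζ) ^ p + N * ζ < β * k1) ∧
    ∃ ι ∈ Ioo (0:ℝ) 1, 0 < k1 * β * (1 - ι) ^ 2 - (k1 * (1 + ι) + ι) ^ p - 3 * ι := by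
  constructor
  · obtain ⟨ζ, h1, h2⟩ := exists_small (f := fun ζ => β * k1 - ((k1 + ζ) ^ p + N * ζ)) (by
      have : ContinuousAt (fun ζ : ℝ => (k1 + ζ) ^ p) 0 :=
        ContinuousAt.rpow_const (by fun_prop) (Or.inl (by simpa using hk1.ne'))
      fun_prop) (by simpa using h)
    exact ⟨ζ, h1, by linarith⟩
  · exact exists_small (f := fun ι => k1 * β * (1 - ι) ^ 2 - (k1 * (1 + ι) + ι) ^ p - 3 * ι) (by
      have : ContinuousAt (fun ι : ℝ => (k1 * (1 + ι) + ι) ^ p) 0 :=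
        ContinuousAt.rpow_const (by fun_prop) (Or.inl (by simpa using hk1.ne'))
      fun_prop) (by simp; linarith)

lemma ball_sub_dom {n : ℕ} {ω : Set (EuclideanSpace ℝ (Fin n))} (hω : IsOpen ω)
    {x : EuclideanSpace ℝ (Fin n)} (hx : x ∈ ω) : ball x (infDist x (frontier ω)) ⊆ ω := by
  by_cases h0 : infDist x (frontier ω) ≤ 0
  · rw [ball_eq_empty.2 h0]; exact empty_subset _
  push Not at h0
  have hpre : IsPreconnected (ball x (infDist x (frontier ω))) := (convex_ball _ _).isPreconnected
  refine hpre.subset_left_of_subset_union hω isClosed_closure.isOpen_compl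
    (disjoint_left.2 fun y h1 h2 => h2 (subset_closure h1)) ?_ ⟨x, mem_ball_self h0, hx⟩
  intro y hy
  by_cases hyω : y ∈ ω
  · exact Or.inl hyω
  · refine Or.inr fun hyc => ?_
    have hyf : y ∈ frontier ω := by rw [hω.frontier_eq]; exact ⟨hyc, hyω⟩
    have := infDist_le_dist_of_mem (x := x) hyf
    rw [mem_ball, dist_comm] at hy
    linarith

lemma grad_dist {n : ℕ} {F : Set (EuclideanSpace ℝ (Fin n))}
    {x b : EuclideanSpace ℝ (Fin n)} {ν : EuclideanSpace ℝ (Fin n)} {s : ℝ}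
    (hb : b ∈ F) (hν : ‖ν‖ = 1) (hs : 0 < s) (hx : x = b + s • ν) (hd : infDist x F = s)
    (hdiff : DifferentiableAt ℝ (fun y => infDist y F) x) :
    HasGradientAt (fun y => infDist y F) ν x := by
  have hF : F.Nonempty := ⟨b, hb⟩
  have hG := hdiff.hasGradientAt
  obtain ⟨g, hg⟩ : ∃ g, g = gradient (fun y => infDist y F) x := ⟨_, rfl⟩
  rw [← hg] at hG
  have hgn : ‖g‖ ≤ 1 := by
    have h1 := norm_fderiv_le_of_lipschitz ℝ (x₀ := x) (lipschitz_infDist_pt F)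
    rw [← toDual_gradient, ← hg, LinearIsometryEquiv.norm_map] at h1
    simpa using h1
  have hval : ∀ y ∈ Icc 0 s, infDist (x - y • ν) F = s - y := by
    intro y hy
    apply le_antisymm
    · refine (infDist_le_dist_of_mem hb).trans ?_
      rw [dist_eq_norm, hx, show b + s • ν - y • ν - b = (s - y) • ν by rw [sub_smul]; abel,
        norm_smul, hν, Real.norm_eq_abs, abs_of_nonneg (by linarith [hy.2]), mul_one]
    · have h2 := infDist_le_infDist_add_dist (s := F) (x := x) (y := x - y • ν)
      rw [dist_eq_norm, show x - (x - y • ν) = y • ν by abel, norm_smul, hν, Real.norm_eq_abs,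
        abs_of_nonneg hy.1] at h2
      linarith
  have hder : HasDerivAt (fun y : ℝ => infDist (x - y • ν) F) (-⟪g, ν⟫) 0 := by
    have h1 : HasDerivAt (fun y : ℝ => x - y • ν) (-ν) 0 := by
      have := ((hasDerivAt_id (0:ℝ)).smul_const ν).const_sub x
      simpa using this
    have h2 : HasFDerivAt (fun y => infDist y F) (InnerProductSpace.toDual ℝ _ g)
      ((fun y : ℝ => x - y • ν) 0) := by simpa using hG.hasFDerivAt
    have := h2.comp_hasDerivAt (0:ℝ) h1
    exact this.congr_deriv (by simp)
  have hder2 : HasDerivWithinAt (fun y : ℝ => infDist (x - y • ν) F) (-1) (Icc 0 s) 0 := by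
    have h1 : HasDerivWithinAt (fun y : ℝ => s - y) (-1) (Icc 0 s) 0 := by
      simpa using ((hasDerivAt_id (0:ℝ)).const_sub s).hasDerivWithinAt
    exact h1.congr hval (hval 0 ⟨le_rfl, hs.le⟩)
  have huniq : UniqueDiffWithinAt ℝ (Icc 0 s) 0 := uniqueDiffOn_Icc hs 0 ⟨le_rfl, hs.le⟩
  have he : -⟪g, ν⟫ = -1 := huniq.eq_deriv _ hder.hasDerivWithinAt hder2
  have hgν : g = ν := by
    have h1 : ‖g - ν‖ ^ 2 ≤ 0 := by
      rw [norm_sub_sq_real, hν]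
      nlinarith [norm_nonneg g]
    have h2 : ‖g - ν‖ = 0 := by nlinarith [norm_nonneg (g - ν)]
    exact sub_eq_zero.1 (norm_eq_zero.1 h2)
  rw [← hgν]; exact hG

lemma normal_unique {n : ℕ} {ω : Set (EuclideanSpace ℝ (Fin n))} (hC : IsC2Boundary ω)
    {b : EuclideanSpace ℝ (Fin n)} (hb : b ∈ frontier ω) :
    ∃ u : EuclideanSpace ℝ (Fin n), ∀ ν, ‖ν‖ = 1 → ∀ s > (0:ℝ), ball (b + s • ν) s ⊆ ω → ν = u := by
  obtain ⟨f, U, hU, hf, hf', hlt, heq⟩ := hC b hb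
  have hbU := mem_of_mem_nhds hU
  have hfd : DifferentiableAt ℝ f b := (hf.contDiffAt hU).differentiableAt (by norm_num)
  have hG := hfd.hasGradientAt
  have hg0 : gradient f b ≠ 0 := by
    intro h
    apply hf' b hbU
    rw [← toDual_gradient, h, map_zero]
  have hfb : f b = 0 := by
    have : b ∈ U ∩ {y | f y = 0} := by rw [← heq]; exact ⟨hbU, hb⟩
    exact this.2
  obtain ⟨g, hg⟩ : ∃ g, g = gradient f b := ⟨_, rfl⟩
  rw [← hg] at hG hg0
  refine ⟨-(‖g‖⁻¹ • g), fun ν hν s hs hball => ?_⟩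
  have hle : ∀ e, 0 < ⟪e, ν⟫ → ⟪g, e⟫ ≤ 0 := by
    intro e he
    have hder : HasDerivAt (fun y : ℝ => f (b + y • e)) ⟪g, e⟫ 0 := by
      have h1 : HasDerivAt (fun y : ℝ => b + y • e) e 0 := by
        have := ((hasDerivAt_id (0:ℝ)).smul_const e).const_add b
        simpa using this
      have h2 : HasFDerivAt f (InnerProductSpace.toDual ℝ _ g)
        ((fun y : ℝ => b + y • e) 0) := by simpa using hG.hasFDerivAt
      have := h2.comp_hasDerivAt (0:ℝ) h1
      exact this.congr_deriv (by simp)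
    have hcont : Tendsto (fun y : ℝ => b + y • e) (nhds 0) (nhds b) := by
      have : Continuous (fun y : ℝ => b + y • e) := by fun_prop
      simpa using this.tendsto 0
    have hU' : ∀ᶠ y : ℝ in nhdsWithin 0 (Ioi 0), b + y • e ∈ U :=
      (hcont.eventually hU).filter_mono nhdsWithin_le_nhds
    have hslope := hder.tendsto_slope_zero_right
    apply le_of_tendsto hslope
    have hsm : ∀ᶠ y : ℝ in nhdsWithin 0 (Ioi 0), y * ‖e‖ ^ 2 < 2 * s * ⟪e, ν⟫ := by
      have : Continuous (fun y : ℝ => y * ‖e‖ ^ 2) := by fun_prop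
      have h3 : Tendsto (fun y : ℝ => y * ‖e‖ ^ 2) (nhds 0) (nhds 0) := by simpa using this.tendsto 0
      exact (h3.eventually (gt_mem_nhds (by positivity))).filter_mono nhdsWithin_le_nhds
    filter_upwards [hU', hsm, self_mem_nhdsWithin] with y h1 h2 h3
    have h3 : 0 < y := h3
    have hin : b + y • e ∈ ω := by
      apply hball
      rw [mem_ball, dist_eq_norm, show b + y • e - (b + s • ν) = y • e - s • ν by abel]
      have : ‖y • e - s • ν‖ ^ 2 < s ^ 2 := by
        rw [norm_sub_sq_real, norm_smul, norm_smul, inner_smul_left, inner_smul_right, hν,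
          Real.norm_eq_abs, Real.norm_eq_abs, mul_pow, mul_pow, sq_abs, sq_abs]
        simp only [conj_trivial, one_pow, mul_one]
        nlinarith
      exact lt_of_pow_lt_pow_left₀ 2 hs.le this
    have hneg : f (b + y • e) < 0 := by
      have : b + y • e ∈ U ∩ {y | f y < 0} := by rw [← hlt]; exact ⟨h1, hin⟩
      exact this.2
    simp only [zero_add, zero_smul, add_zero, hfb, sub_zero, smul_eq_mul]
    exact mul_nonpos_of_nonneg_of_nonpos (inv_nonneg.2 h3.le) hneg.le
  have hνν : ⟪ν, ν⟫ = 1 := by rw [real_inner_self_eq_norm_sq, hν]; norm_num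
  have h1 : ⟪g, ν⟫ ≤ 0 := hle ν (by rw [hνν]; norm_num)
  have h2 : ‖g‖ ^ 2 ≤ ⟪g, ν⟫ ^ 2 := by
    have : ∀ ε > (0:ℝ), ‖g‖ ^ 2 - ⟪g, ν⟫ ^ 2 ≤ ε * (-⟪g, ν⟫ + 1) := by
      intro ε hε
      have := hle (g - ⟪g, ν⟫ • ν + ε • ν) (by
        rw [inner_add_left, inner_sub_left, inner_smul_left, inner_smul_left, hνν]
        simpa using hε)
      rw [inner_add_right, inner_sub_right, inner_smul_right, inner_smul_right,
        real_inner_self_eq_norm_sq] at this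
      nlinarith
    by_contra hcon
    push Not at hcon
    have h3 : 0 < -⟪g, ν⟫ + 1 := by linarith
    have := this ((‖g‖ ^ 2 - ⟪g, ν⟫ ^ 2) / (2 * (-⟪g, ν⟫ + 1))) (div_pos (by linarith) (by linarith))
    have e : (‖g‖ ^ 2 - ⟪g, ν⟫ ^ 2) / (2 * (-⟪g, ν⟫ + 1)) * (-⟪g, ν⟫ + 1) = (‖g‖ ^ 2 - ⟪g, ν⟫ ^ 2) / 2 := by
      field_simp
    rw [e] at this
    linarith
  have hgp : 0 < ‖g‖ := norm_pos_iff.2 hg0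
  have h3 : ‖g‖ ≤ -⟪g, ν⟫ := by
    apply le_of_sq_le_sq _ (by linarith)
    linarith [neg_sq ⟪g, ν⟫]
  have h4 : ‖ν + ‖g‖⁻¹ • g‖ ^ 2 ≤ 0 := by
    rw [norm_add_sq_real, norm_smul, inner_smul_right, hν, norm_inv, norm_norm, inv_mul_cancel₀ hgp.ne',
      real_inner_comm]
    have : ‖g‖⁻¹ * ‖g‖ ≤ ‖g‖⁻¹ * (-⟪g, ν⟫) := by gcongr
    rw [inv_mul_cancel₀ hgp.ne'] at this
    linarith
  have h5 : ‖ν + ‖g‖⁻¹ • g‖ = 0 := by nlinarith [norm_nonneg (ν + ‖g‖⁻¹ • g)]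
  exact eq_neg_of_add_eq_zero_left (norm_eq_zero.1 h5)

lemma nearest {n : ℕ} {ω : Set (EuclideanSpace ℝ (Fin n))} (hω : IsOpen ω)
    (hbd : Bornology.IsBounded ω) {a : EuclideanSpace ℝ (Fin n)} (ha : a ∈ frontier ω)
    {x : EuclideanSpace ℝ (Fin n)} (hx : x ∈ ω) :
    ∃ b ∈ frontier ω, ∃ ν, ‖ν‖ = 1 ∧ 0 < infDist x (frontier ω) ∧
      x = b + infDist x (frontier ω) • ν ∧ ‖b - a‖ ≤ 2 * ‖x - a‖ := by
  have hcomp : IsCompact (frontier ω) :=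
    Metric.isCompact_of_isClosed_isBounded isClosed_frontier
      (hbd.closure.subset frontier_subset_closure)
  obtain ⟨b, hb, hbx⟩ := hcomp.exists_infDist_eq_dist ⟨a, ha⟩ x
  have hpos : 0 < infDist x (frontier ω) := by
    apply (isClosed_frontier.notMem_iff_infDist_pos ⟨a, ha⟩).1
    intro h
    rw [hω.frontier_eq] at h
    exact h.2 hx
  have hle : infDist x (frontier ω) ≤ ‖x - a‖ := by
    rw [← dist_eq_norm]; exact infDist_le_dist_of_mem ha
  rw [dist_eq_norm] at hbx
  refine ⟨b, hb, (infDist x (frontier ω))⁻¹ • (x - b), ?_, hpos, ?_, ?_⟩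
  · rw [norm_smul, norm_inv, Real.norm_eq_abs, abs_of_pos hpos, ← hbx, inv_mul_cancel₀ hpos.ne']
  · rw [smul_smul, mul_inv_cancel₀ hpos.ne', one_smul]; abel
  · calc ‖b - a‖ = ‖(x - a) - (x - b)‖ := by congr 1; abel
      _ ≤ ‖x - a‖ + ‖x - b‖ := norm_sub_le _ _
      _ ≤ _ := by linarith

lemma nearest_normal {n : ℕ} {ω : Set (EuclideanSpace ℝ (Fin n))} (hω : IsOpen ω)
    (hbd : Bornology.IsBounded ω) (hC : IsC2Boundary ω) {a : EuclideanSpace ℝ (Fin n)}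
    (ha : a ∈ frontier ω) {R : ℝ} (hR : 0 < R) {νB : EuclideanSpace ℝ (Fin n) → EuclideanSpace ℝ (Fin n)}
    (hνB : ∀ b ∈ ball a R ∩ frontier ω, ‖νB b‖ = 1 ∧
      ∀ s ∈ Ioo (0 : ℝ) R, b + s • νB b ∈ ω ∧ infDist (b + s • νB b) (frontier ω) = s)
    {x : EuclideanSpace ℝ (Fin n)} (hx : x ∈ ω) {σ : ℝ} (hσ : σ ≤ R) (hxσ : ‖x - a‖ < σ / 2) :
    ∃ b ∈ ball a σ ∩ frontier ω, 0 < infDist x (frontier ω) ∧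
      x = b + infDist x (frontier ω) • νB b := by
  obtain ⟨b, hb, ν, hν, hpos, hxb, hba⟩ := nearest hω hbd ha hx
  have hbσ : b ∈ ball a σ := by rw [mem_ball, dist_eq_norm]; linarith
  refine ⟨b, ⟨hbσ, hb⟩, hpos, ?_⟩
  obtain ⟨u, hu⟩ := normal_unique hC hb
  obtain ⟨h1, h2⟩ := hνB b ⟨ball_subset_ball hσ hbσ, hb⟩
  have e1 : ν = u := by
    refine hu ν hν _ hpos ?_
    rw [← hxb]; exact ball_sub_dom hω hx
  have e2 : νB b = u := by
    obtain ⟨h3, h4⟩ := h2 (R / 2) ⟨by linarith, by linarith⟩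
    refine hu _ h1 (R / 2) (by linarith) ?_
    have := ball_sub_dom hω h3
    rwa [h4] at this
  rw [e2, ← e1]; exact hxb

lemma region_est {n : ℕ} (hn : 1 ≤ n) {p β k k1 c q ζ r R σ M Cε : ℝ} (hp : 1 < p)
    (hβp : β * p = β + 1)
    (hq : q = 1 - β) (hq0 : 0 < q) (hcq : c * q = k1) (hk1 : 0 < k1) (hζ0 : 0 < ζ) (hζ1 : ζ < 1)
    (hζ : (k1 + ζ) ^ p + (n + 1) * ζ < β * k1) (hkk : k < k1)
    (hr : 0 < r) (hrR : r ≤ R) (hσ : σ ≤ r)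
    (hMs : ∀ s ∈ Ioo 0 r, M ≤ ζ * s ^ (-(β * p)))
    (hCs : ∀ s ∈ Ioo 0 r, Cε ≤ ζ ^ p / 2 * s ^ (-(β * p)))
    {ω : Set (EuclideanSpace ℝ (Fin n))} (hω : IsOpen ω) (hbd : Bornology.IsBounded ω)
    (hC : IsC2Boundary ω) {a : EuclideanSpace ℝ (Fin n)} (ha : a ∈ frontier ω)
    {δ : EuclideanSpace ℝ (Fin n) → ℝ} (hδ : ∀ x, δ x = infDist x (frontier ω))
    (hδ2 : ContDiffOn ℝ 2 δ (closure (ball a (2 * R) ∩ ω)))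
    {νB : EuclideanSpace ℝ (Fin n) → EuclideanSpace ℝ (Fin n)}
    (hνB : ∀ b ∈ ball a R ∩ frontier ω, ‖νB b‖ = 1 ∧
      ∀ s ∈ Ioo (0 : ℝ) R, b + s • νB b ∈ ω ∧ δ (b + s • νB b) = s)
    {v : EuclideanSpace ℝ (Fin n) → ℝ} {G : EuclideanSpace ℝ (Fin n) → EuclideanSpace ℝ (Fin n)}
    {H : EuclideanSpace ℝ (Fin n) → (EuclideanSpace ℝ (Fin n) →L[ℝ] EuclideanSpace ℝ (Fin n))}
    {v' : EuclideanSpace ℝ (Fin n) → ℝ}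
    (hvc : ContinuousOn v (closure (ball a (2 * R) ∩ ω)))
    (hGc : ContinuousOn G (closure (ball a (2 * R) ∩ ω)))
    (hG : ∀ x ∈ ball a (2 * R) ∩ ω, HasGradientAt v (G x) x)
    (hH : ∀ x ∈ ball a (2 * R) ∩ ω, HasFDerivAt G (H x) x)
    (hpde : ∀ x ∈ ball a (2 * R) ∩ ω, v' x - tr (H x) = ‖G x‖ ^ p)
    (hv0 : ∀ b ∈ ball a R ∩ frontier ω, v b = 0)
    (hM : ∀ x ∈ ball a (2 * R) ∩ ω, |v' x| ≤ M)
    (htan : ∀ x ∈ ball a (2 * R) ∩ ω, ∀ τ : EuclideanSpace ℝ (Fin n), ‖τ‖ = 1 →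
      ⟪τ, gradient δ x⟫ = 0 → |⟪G x, τ⟫| ^ p + |⟪H x τ, τ⟫| ≤ ζ ^ p / 2 * (δ x) ^ (-(β * p)) + Cε)
    (hend : ∀ b ∈ ball a σ ∩ frontier ω, |⟪G (b + r • νB b), νB b⟫| ≤ k * r ^ (-β)) :
    ∀ x ∈ ω, ‖x - a‖ < σ / 2 → |v x| ≤ c * δ x ^ q ∧ ‖G x‖ ≤ (k1 + ζ) * δ x ^ (-β) := by
  intro x hx hxσ
  have hR : 0 < R := by linarith
  obtain ⟨b, ⟨hbσ, hbf⟩, hpos, hxb⟩ := nearest_normal hω hbd hC ha hR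
    (νB := νB) (by simpa only [hδ] using hνB) hx (hσ.trans hrR) hxσ
  rw [← hδ] at hpos hxb
  have hδx : δ x < r := by
    have h1 : δ x ≤ dist x a := by rw [hδ]; exact infDist_le_dist_of_mem ha
    rw [dist_eq_norm] at h1
    linarith
  have hbR : b ∈ ball a R ∩ frontier ω := ⟨ball_subset_ball (hσ.trans hrR) hbσ, hbf⟩
  obtain ⟨hν, hνs⟩ := hνB b hbR
  obtain ⟨ν, hνeq⟩ : ∃ ν, ν = νB b := ⟨_, rfl⟩
  have hend' := hend b ⟨hbσ, hbf⟩
  rw [← hνeq] at hν hνs hxb hend'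
  have hDo : IsOpen (ball a (2 * R) ∩ ω) := isOpen_ball.inter hω
  have hin : ∀ s ∈ Ioo 0 R, b + s • ν ∈ ball a (2 * R) ∩ ω := by
    intro s hs
    refine ⟨?_, (hνs s hs).1⟩
    have h1 : ‖b - a‖ < R := by simpa [dist_eq_norm] using hbR.1
    rw [mem_ball, dist_eq_norm]
    calc ‖b + s • ν - a‖ = ‖(b - a) + s • ν‖ := by congr 1; abel
      _ ≤ ‖b - a‖ + ‖s • ν‖ := norm_add_le _ _
      _ < 2 * R := by
        rw [norm_smul, hν, Real.norm_eq_abs, abs_of_pos hs.1]; linarith [hs.2]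
  have hlc : Continuous (fun s : ℝ => b + s • ν) := by fun_prop
  have hincl : ∀ s ∈ Icc 0 R, b + s • ν ∈ closure (ball a (2 * R) ∩ ω) := by
    intro s hs
    rw [← closure_Ioo hR.ne] at hs
    exact map_mem_closure (f := fun s : ℝ => b + s • ν) hlc hs hin
  have hld : ∀ s : ℝ, HasDerivAt (fun s : ℝ => b + s • ν) ν s := by
    intro s
    have := ((hasDerivAt_id s).smul_const ν).const_add b
    simpa using this
  have hrR' : ∀ s ∈ Ioo 0 r, s ∈ Ioo 0 R := fun s hs => ⟨hs.1, hs.2.trans_le hrR⟩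
  have key := ray hn hp hβp hq hq0 hcq hk1 hζ0 hζ1 hζ (G := fun s => G (b + s • ν))
    (H := fun s => H (b + s • ν)) (w := fun s => v (b + s • ν)) (w' := fun s => v' (b + s • ν))
    hν (r := r) ?_ ?_ ?_ ?_ ?_ ?_ ?_ ?_ ?_ (δ x) ⟨hpos, hδx⟩
  · simp only [← hxb] at key
    exact key
  · exact hGc.comp hlc.continuousOn (fun s hs => hincl s ⟨hs.1.le, hs.2.trans hrR⟩)
  · intro s hs
    exact (hH _ (hin s (hrR' s hs))).comp_hasDerivAt s (hld s)
  · exact hvc.comp hlc.continuousOn (fun s hs => hincl s ⟨hs.1, hs.2.le.trans hrR⟩)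
  · simpa using hv0 b hbR
  · intro s hs
    have := (hG _ (hin s (hrR' s hs))).hasFDerivAt.comp_hasDerivAt s (hld s)
    exact this.congr_deriv (by simp)
  · intro s hs
    exact hpde _ (hin s (hrR' s hs))
  · intro s hs
    exact (hM _ (hin s (hrR' s hs))).trans (hMs s hs)
  · intro s hs τ h1 h2
    have hxs := hin s (hrR' s hs)
    have hδs := (hνs s (hrR' s hs)).2
    have hgrad : gradient δ (b + s • ν) = ν := by
      have hfun : δ = fun y => infDist y (frontier ω) := funext hδ
      have hd : DifferentiableAt ℝ δ (b + s • ν) :=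
        (hδ2.contDiffAt (mem_of_superset (hDo.mem_nhds hxs) subset_closure)).differentiableAt
          (by norm_num)
      rw [hfun] at hd hδs ⊢
      exact (grad_dist hbf hν hs.1 rfl hδs hd).gradient
    have := htan _ hxs τ h1 (by rw [hgrad]; exact h2)
    rw [hδs] at this
    have h3 := hCs s hs
    linarith
  · refine hend'.trans_lt ?_
    have : 0 < r ^ (-β) := Real.rpow_pos_of_pos hr _
    gcongr

lemma lin_of_barrier {c q k1 β γ d P P0 : ℝ} (hq : q = 1 - β) (hβ0 : 0 < β) (hq0 : 0 < q) (hγ : γ = q⁻¹)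
    (hcq : c * q = k1) (hk1 : 0 < k1) (hd : 0 ≤ d) (hP0 : 0 < P0) (hP : P0 ≤ P) :
    c * ((d + P ^ γ) ^ q - P) ≤ k1 * (P0 ^ γ) ^ (-β) * d := by
  have hγ0 : 0 < γ := by rw [hγ]; positivity
  have hPp : 0 < P := by linarith
  have hc0 : 0 < c := by
    by_contra h
    push Not at h
    nlinarith
  obtain ⟨ρ, hρ⟩ : ∃ ρ, ρ = P ^ γ := ⟨_, rfl⟩
  have hρ0 : 0 < ρ := by rw [hρ]; positivity
  have hρq : ρ ^ q = P := by
    rw [hρ, ← Real.rpow_mul hPp.le, hγ, inv_mul_cancel₀ hq0.ne', Real.rpow_one]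
  have hmono : ρ ^ (-β) ≤ (P0 ^ γ) ^ (-β) := by
    apply Real.rpow_le_rpow_of_nonpos (by positivity) _ (by linarith)
    rw [hρ]
    exact Real.rpow_le_rpow hP0.le hP hγ0.le
  have h1 := rpow_one_add_le_one_add_mul_self (s := d / ρ)
    (by have : 0 ≤ d / ρ := by positivity
        linarith) hq0.le (by linarith : q ≤ 1)
  have h2 : (d + ρ) ^ q = ρ ^ q * (1 + d / ρ) ^ q := by
    rw [← Real.mul_rpow hρ0.le (by positivity)]
    congr 1
    field_simp
    ring
  have h3 : ρ ^ (-β) = ρ ^ q / ρ := by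
    rw [← Real.rpow_sub_one hρ0.ne']; congr 1; linarith
  have h4 : (d + ρ) ^ q - P ≤ q * ρ ^ (-β) * d := by
    rw [h2, h3]
    have : ρ ^ q * (1 + d / ρ) ^ q ≤ ρ ^ q * (1 + q * (d / ρ)) := by gcongr
    have e : ρ ^ q * (1 + q * (d / ρ)) = ρ ^ q + q * (ρ ^ q / ρ) * d := by ring
    rw [hρq] at *
    linarith
  rw [← hρ]
  calc c * ((d + ρ) ^ q - P) ≤ c * (q * ρ ^ (-β) * d) := by gcongr
    _ = k1 * ρ ^ (-β) * d := by rw [← hcq]; ring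
    _ ≤ _ := by gcongr

lemma tr_neg {n : ℕ} (H : EuclideanSpace ℝ (Fin n) →L[ℝ] EuclideanSpace ℝ (Fin n)) :
    tr (-H) = - tr H := by
  simp [tr]

lemma hasGradientAt_neg' {n : ℕ} {f : EuclideanSpace ℝ (Fin n) → ℝ} {g x : EuclideanSpace ℝ (Fin n)}
    (h : HasGradientAt f g x) : HasGradientAt (fun y => - f y) (-g) x := by
  rw [hasGradientAt_iff_hasFDerivAt] at h ⊢
  rw [map_neg]
  exact h.neg

lemma two_sided {n : ℕ} {p β k1 c q γ ι j L κ θ σ t : ℝ} {T₀ R : ℝ} (hp : 0 < p)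
    (hβ0 : 0 < β) (hβ1 : β < 1) (hβp : β * p = β + 1) (hq : q = 1 - β) (hγ : γ = q⁻¹)
    (hcq : c * q = k1) (hk1 : 0 < k1) (hι0 : 0 < ι) (hι1 : ι < 1)
    (hι : 0 < k1 * β * (1 - ι) ^ 2 - (k1 * (1 + ι) + ι) ^ p - 3 * ι)
    (hκ : 0 < κ) (hθ : 0 < θ) (hκj : κ * (16 + 4 * n) * (θ + θ ^ 2) ≤ j)
    (hj1 : j ≤ 1) (hγj : γ * γ * j ≤ ι) (hcj : c * j ≤ ι) (hjσ : j ≤ σ)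
    (hσ0 : 0 < σ) (hσ1 : σ ≤ 1 / 2) (hσL : k1 * (2 * σ) * (L + 2) ≤ ι) (hL : 0 < L)
    (hσR : σ ≤ R)
    {ω : Set (EuclideanSpace ℝ (Fin n))} (hω : IsOpen ω) (hbd : Bornology.IsBounded ω)
    {a : EuclideanSpace ℝ (Fin n)} (ha : a ∈ frontier ω)
    {δ : EuclideanSpace ℝ (Fin n) → ℝ} (hδ : ∀ x, δ x = infDist x (frontier ω))
    (hδ2 : ContDiffOn ℝ 2 δ (closure (ball a (2 * R) ∩ ω)))
    (hδL : ∀ x ∈ ball a (2 * R) ∩ ω,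
      |∑ i : Fin n, fderiv ℝ (fun y => fderiv ℝ δ y (EuclideanSpace.single i (1 : ℝ))) x
        (EuclideanSpace.single i (1 : ℝ))| ≤ L)
    {v : EuclideanSpace ℝ (Fin n) → ℝ → ℝ}
    {G : EuclideanSpace ℝ (Fin n) → ℝ → EuclideanSpace ℝ (Fin n)}
    {H : EuclideanSpace ℝ (Fin n) → ℝ → (EuclideanSpace ℝ (Fin n) →L[ℝ] EuclideanSpace ℝ (Fin n))}
    {v' : EuclideanSpace ℝ (Fin n) → ℝ → ℝ}
    (hvc : ContinuousOn (fun z : EuclideanSpace ℝ (Fin n) × ℝ => v z.1 z.2)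
      (closure (ball a (2 * R) ∩ ω) ×ˢ Icc (T₀ - θ) T₀))
    (hG : ∀ t ∈ Ioo (T₀ - θ) T₀, ∀ x ∈ ball a (2 * R) ∩ ω, HasGradientAt (fun y => v y t) (G x t) x)
    (hH : ∀ t ∈ Ioo (T₀ - θ) T₀, ∀ x ∈ ball a (2 * R) ∩ ω, HasFDerivAt (fun y => G y t) (H x t) x)
    (hv' : ∀ t ∈ Ioo (T₀ - θ) T₀, ∀ x ∈ ball a (2 * R) ∩ ω, HasDerivAt (fun s => v x s) (v' x t) t)
    (hpde : ∀ t ∈ Ioo (T₀ - θ) T₀, ∀ x ∈ ball a (2 * R) ∩ ω, v' x t - tr (H x t) = ‖G x t‖ ^ p)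
    (hv0 : ∀ t ∈ Ioo (T₀ - θ) T₀, ∀ b ∈ ball a R ∩ frontier ω, v b t = 0)
    (hvq : ∀ t ∈ Ioo (T₀ - θ) T₀, ∀ x ∈ ω, ‖x - a‖ < σ / 2 → |v x t| ≤ c * δ x ^ q)
    (ht : t ∈ Ioo (T₀ - θ / 4) T₀) {x : EuclideanSpace ℝ (Fin n)} (hx : x ∈ ω)
    (hxσ : ‖x - a‖ < σ / 4) :
    |v x t| ≤ k1 * ((κ * (5 / 64 * σ ^ 2 * (θ / 4)) ^ 2) ^ γ) ^ (-β) * δ x := by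
  have hq0 : 0 < q := by linarith
  have hR : 0 < R := by linarith
  have hDo : IsOpen (ball a (2 * R) ∩ ω) := isOpen_ball.inter hω
  have hIcc : ∀ s ∈ Icc (T₀ - θ / 2) t, s ∈ Ioo (T₀ - θ) T₀ := fun s hs =>
    ⟨by linarith [hs.1], by linarith [hs.2, ht.2]⟩
  have hsub : closedBall a (3 * σ / 8) ⊆ ball a (2 * R) := closedBall_subset_ball (by linarith)
  have hωW : ω ∩ closedBall a (3 * σ / 8) ⊆ ball a (2 * R) ∩ ω := fun y hy => ⟨hsub hy.2, hy.1⟩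
  have hclW : closure ω ∩ closedBall a (3 * σ / 8) ⊆ closure (ball a (2 * R) ∩ ω) := fun y hy =>
    isOpen_ball.inter_closure ⟨hsub hy.2, hy.1⟩
  have hδc : Continuous δ := by
    rw [show δ = fun y => infDist y (frontier ω) from funext hδ]
    exact continuous_infDist_pt _
  have hδ0 : ∀ x ∈ frontier ω, δ x = 0 := fun x hx => by rw [hδ]; exact infDist_zero_of_mem hx
  have hδpos : ∀ x ∈ ω, 0 < δ x := by
    intro x hx
    obtain ⟨_, _, _, _, h, _⟩ := nearest hω hbd ha hx
    rw [hδ]; exact h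
  have hδle : ∀ x, δ x ≤ dist x a := fun x => by rw [hδ]; exact infDist_le_dist_of_mem ha
  have hδg : ∀ x ∈ ball a (2 * R) ∩ ω, ∃ ν : EuclideanSpace ℝ (Fin n), ‖ν‖ = 1 ∧
      ∀ e, fderiv ℝ δ x e = ⟪ν, e⟫ := by
    intro x hx
    obtain ⟨b, hb, ν, hν, hpos, hxb, _⟩ := nearest hω hbd ha hx.2
    refine ⟨ν, hν, fun e => ?_⟩
    have hd : DifferentiableAt ℝ δ x :=
      (hδ2.contDiffAt (mem_of_superset (hDo.mem_nhds hx) subset_closure)).differentiableAt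
        (by norm_num)
    have hfun : δ = fun y => infDist y (frontier ω) := funext hδ
    rw [hfun] at hd ⊢
    have := (grad_dist hb hν hpos hxb rfl hd).hasFDerivAt.fderiv
    rw [this]; simp
  have hcl : ∀ y ∈ ω ∩ closedBall a (3 * σ / 8), ‖y - a‖ < σ / 2 := by
    intro y hy
    have := hy.2
    rw [mem_closedBall, dist_eq_norm] at this
    linarith
  have hfr : ∀ y ∈ frontier ω ∩ closedBall a (3 * σ / 8), y ∈ ball a R ∩ frontier ω := fun y hy =>
    ⟨closedBall_subset_ball (by linarith) hy.2, hy.1⟩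
  have hcont : ContinuousOn (fun z : EuclideanSpace ℝ (Fin n) × ℝ => v z.1 z.2)
      ((closure ω ∩ closedBall a (3 * σ / 8)) ×ˢ Icc (T₀ - θ / 2) t) :=
    hvc.mono (prod_mono hclW fun s hs => ⟨(hIcc s hs).1.le, (hIcc s hs).2.le⟩)
  have htt : t ∈ Icc (T₀ - θ / 2) t := ⟨by linarith [ht.1], le_rfl⟩
  have hxx : x ∈ ω ∩ closedBall a (3 * σ / 8) := ⟨hx, by
    rw [mem_closedBall, dist_eq_norm]; linarith⟩
  have up := barrier (n := n) (Y0 := 2 * σ) (σ1 := 3 * σ / 8) (t1 := T₀ - θ / 2) (t2 := t)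
    hp hβ0 hβ1 hβp hq hγ hcq hk1 hι0 hι1 hι hκ hθ hκj hj1 hγj hcj
    (by linarith) (by linarith) (by linarith) (by linarith) hσL hL (by linarith [ht.2]) hω hDo hωW
    hδc hδ0 hδpos hδle (hδ2.mono subset_closure) hδg hδL
    (v := v) (G := G) (H := H) (v' := v')
    (fun s hs => hG s (hIcc s hs)) (fun s hs => hH s (hIcc s hs)) (fun s hs => hv' s (hIcc s hs))
    (fun s hs y hy => (hpde s (hIcc s hs) y hy).le) hcont
    (fun s hs y hy => (hv0 s (hIcc s hs) y (hfr y hy)).le)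
    (fun s hs y hy => (le_abs_self _).trans (hvq s (hIcc s hs) y hy.1 (hcl y hy))) t htt x hxx
  have down := barrier (n := n) (Y0 := 2 * σ) (σ1 := 3 * σ / 8) (t1 := T₀ - θ / 2) (t2 := t)
    hp hβ0 hβ1 hβp hq hγ hcq hk1 hι0 hι1 hι hκ hθ hκj hj1 hγj hcj
    (by linarith) (by linarith) (by linarith) (by linarith) hσL hL (by linarith [ht.2]) hω hDo hωW
    hδc hδ0 hδpos hδle (hδ2.mono subset_closure) hδg hδL
    (v := fun y s => - v y s) (G := fun y s => - G y s) (H := fun y s => - H y s)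
    (v' := fun y s => - v' y s)
    (fun s hs y hy => hasGradientAt_neg' (hG s (hIcc s hs) y hy))
    (fun s hs y hy => (hH s (hIcc s hs) y hy).neg) (fun s hs y hy => (hv' s (hIcc s hs) y hy).neg)
    (fun s hs y hy => by
      have h1 := hpde s (hIcc s hs) y hy
      have h2 : 0 ≤ ‖G y s‖ ^ p := Real.rpow_nonneg (norm_nonneg _) _
      rw [tr_neg, norm_neg]
      linarith) hcont.neg
    (fun s hs y hy => by rw [hv0 s (hIcc s hs) y (hfr y hy), neg_zero])
    (fun s hs y hy => (neg_le_abs _).trans (hvq s (hIcc s hs) y hy.1 (hcl y hy))) t htt x hxx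
  have hmain := lin_of_barrier (c := c) (q := q) (k1 := k1) (β := β) (γ := γ) (d := δ x)
    (P := κ * (((3 * σ / 8) ^ 2 - ‖x - a‖ ^ 2) * (t - (T₀ - θ / 2))) ^ 2)
    (P0 := κ * (5 / 64 * σ ^ 2 * (θ / 4)) ^ 2) hq hβ0 hq0 hγ hcq hk1 (hδpos x hx).le (by positivity)
    (by
      have h1 : 5 / 64 * σ ^ 2 ≤ (3 * σ / 8) ^ 2 - ‖x - a‖ ^ 2 := by nlinarith [norm_nonneg (x - a)]
      have h2 : θ / 4 ≤ t - (T₀ - θ / 2) := by linarith [ht.1]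
      have h3 : 0 ≤ (3 * σ / 8) ^ 2 - ‖x - a‖ ^ 2 := le_trans (by positivity) h1
      gcongr)
  exact abs_le'.2 ⟨up.trans hmain, down.trans hmain⟩

lemma final_grad {n : ℕ} {p β κ0 K1 M σ R : ℝ} (hp : 2 < p) (hβ0 : 0 < β) (hβp : β * (p - 1) = 1)
    (hκ0 : 0 < κ0) (hK1 : 0 ≤ K1) (hM0 : 0 ≤ M) (hσ0 : 0 < σ) (hσ1 : σ ≤ 1) (hσR : σ ≤ R)
    {ω : Set (EuclideanSpace ℝ (Fin n))} (hω : IsOpen ω) (hbd : Bornology.IsBounded ω)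
    {a : EuclideanSpace ℝ (Fin n)} (ha : a ∈ frontier ω)
    {δ : EuclideanSpace ℝ (Fin n) → ℝ} (hδ : ∀ x, δ x = infDist x (frontier ω))
    {v : EuclideanSpace ℝ (Fin n) → ℝ} {G : EuclideanSpace ℝ (Fin n) → EuclideanSpace ℝ (Fin n)}
    {H : EuclideanSpace ℝ (Fin n) → (EuclideanSpace ℝ (Fin n) →L[ℝ] EuclideanSpace ℝ (Fin n))}
    {v' : EuclideanSpace ℝ (Fin n) → ℝ}
    (hG : ∀ x ∈ ball a (2 * R) ∩ ω, HasGradientAt v (G x) x)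
    (hH : ∀ x ∈ ball a (2 * R) ∩ ω, HasFDerivAt G (H x) x)
    (hpde : ∀ x ∈ ball a (2 * R) ∩ ω, v' x - tr (H x) = ‖G x‖ ^ p)
    (hM : ∀ x ∈ ball a (2 * R) ∩ ω, |v' x| ≤ M)
    (hGb : ∀ x ∈ ω, ‖x - a‖ < σ / 2 → ‖G x‖ ≤ κ0 * δ x ^ (-β))
    (hvb : ∀ x ∈ ω, ‖x - a‖ < σ / 4 → |v x| ≤ K1 * δ x)
    {x : EuclideanSpace ℝ (Fin n)} (hx : x ∈ ω) (hxσ : ‖x - a‖ < σ / 8) :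
    ‖G x‖ ≤ 4 * n * (2 * K1) / (min (1 / 2) (1 / (2 * (2 * κ0 ^ (p - 1))))) + (M + 1) := by
  have hB0 : 0 < 2 * κ0 ^ (p - 1) := by positivity
  obtain ⟨B, hB⟩ : ∃ B, B = 2 * κ0 ^ (p - 1) := ⟨_, rfl⟩
  rw [← hB] at hB0 ⊢
  obtain ⟨μ, hμ⟩ : ∃ μ, μ = min (1 / 2) (1 / (2 * B)) := ⟨_, rfl⟩
  rw [← hμ]
  have hμ0 : 0 < μ := by rw [hμ]; positivity
  have hμ2 : μ ≤ 1 / 2 := by rw [hμ]; exact min_le_left _ _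
  have hBμ : B * μ ≤ 1 / 2 := by
    have : μ ≤ 1 / (2 * B) := by rw [hμ]; exact min_le_right _ _
    calc B * μ ≤ B * (1 / (2 * B)) := by gcongr
      _ = 1 / 2 := by field_simp
  have hpos : 0 < δ x := by
    obtain ⟨_, _, _, _, h, _⟩ := nearest hω hbd ha hx
    rw [hδ]; exact h
  have hδle : δ x ≤ ‖x - a‖ := by rw [hδ, ← dist_eq_norm]; exact infDist_le_dist_of_mem ha
  have hμd : μ * δ x ≤ δ x / 2 := by nlinarith
  -- points of the small ball
  have hball : ∀ y ∈ closedBall x (μ * δ x), y ∈ ω ∧ ‖y - a‖ < σ / 4 ∧ δ x / 2 ≤ δ y ∧ δ y ≤ 2 * δ x := by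
    intro y hy
    have hd : dist y x ≤ δ x / 2 := (mem_closedBall.1 hy).trans hμd
    refine ⟨?_, ?_, ?_, ?_⟩
    · apply ball_sub_dom hω hx
      rw [mem_ball, ← hδ]; linarith
    · have : ‖y - a‖ ≤ ‖y - x‖ + ‖x - a‖ := by
        simpa [dist_eq_norm] using dist_triangle y x a
      rw [dist_eq_norm] at hd
      linarith
    · have := infDist_le_infDist_add_dist (s := frontier ω) (x := x) (y := y)
      rw [dist_comm, ← hδ, ← hδ] at this
      linarith
    · have := infDist_le_infDist_add_dist (s := frontier ω) (x := y) (y := x)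
      rw [← hδ, ← hδ] at this
      linarith
  have hW : ∀ y ∈ closedBall x (μ * δ x), y ∈ ball a (2 * R) ∩ ω := by
    intro y hy
    obtain ⟨h1, h2, _, _⟩ := hball y hy
    exact ⟨by rw [mem_ball, dist_eq_norm]; linarith, h1⟩
  have key := interior_grad (isOpen_ball.inter hω) hG hH hpos hμ0 hB0.le hBμ
    (S := 2 * K1) (M := M) (by positivity) hM0 hW ?_ ?_
  · have h1 : (M + 1) * (μ * δ x) ≤ (M + 1) * 1 := by
      have : μ * δ x ≤ 1 := by linarith
      gcongr
    linarith
  · intro y hy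
    obtain ⟨h1, h2, _, h4⟩ := hball y hy
    refine (hvb y h1 h2).trans ?_
    nlinarith
  · intro y hy
    obtain ⟨h1, h2, h3, h4⟩ := hball y hy
    have hδy : 0 < δ y := by linarith
    have e1 := hpde y (hW y hy)
    have e2 := abs_le.1 (hM y (hW y hy))
    have e3 : ‖G y‖ ^ p ≤ B / δ x * ‖G y‖ := by
      have hsplit : ‖G y‖ ^ p = ‖G y‖ ^ (p - 1) * ‖G y‖ := by
        rw [← Real.rpow_add_one' (norm_nonneg _) (by linarith)]; congr 1; ring
      rw [hsplit]
      gcongr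
      have h5 := hGb y h1 (by linarith)
      calc ‖G y‖ ^ (p - 1) ≤ (κ0 * δ y ^ (-β)) ^ (p - 1) :=
            Real.rpow_le_rpow (norm_nonneg _) h5 (by linarith)
        _ = κ0 ^ (p - 1) * (δ y)⁻¹ := by
            rw [Real.mul_rpow hκ0.le (by positivity), ← Real.rpow_mul hδy.le,
              show -β * (p - 1) = -1 by linarith, Real.rpow_neg_one]
        _ ≤ κ0 ^ (p - 1) * (δ x / 2)⁻¹ := by gcongr
        _ = B / δ x := by rw [hB]; field_simp
    have e4 : 0 ≤ ‖G y‖ ^ p := Real.rpow_nonneg (norm_nonneg _) _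
    rw [abs_le]
    constructor <;> linarith [e2.1, e2.2]

theorem stmt13 {n : ℕ} (hn : 1 ≤ n)
    (p β dp : ℝ) (hp : 2 < p) (hβ : β = 1 / (p - 1)) (hdp : dp = β ^ β)
    (k : ℝ) (hk : k ∈ Ioo 0 dp) (M : ℝ) (hM : 0 < M) :
    -- the constant K = K(n,p,k,M,σ,θ)
    ∃ K : ℝ → ℝ → ℝ, (∀ σ θ : ℝ, 0 < σ → 0 < θ → 0 < K σ θ) ∧
    -- the radius r₀ = r₀(n,p,k,M,L,(C_ε))
    ∀ L > (0 : ℝ), ∀ Cf : ℝ → ℝ, (∀ ε ∈ Ioo (0 : ℝ) 1, 0 < Cf ε) →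
    ∃ r₀ > (0 : ℝ),
    -- the bounded C² domain ω and a ∈ ∂ω, R > 0, D = B_{2R}(a) ∩ ω
    ∀ ω : Set (EuclideanSpace ℝ (Fin n)), IsOpen ω → Bornology.IsBounded ω → IsC2Boundary ω →
    ∀ a ∈ frontier ω, ∀ R > (0 : ℝ),
    ∀ δ : EuclideanSpace ℝ (Fin n) → ℝ, (∀ x, δ x = infDist x (frontier ω)) →
    -- inner sphere condition of radius R at each point of B_R(a) ∩ ∂ω
    (∀ b ∈ ball a R ∩ frontier ω, ∃ y, ball y R ⊆ ω ∧ dist y b = R) →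
    -- δ is C² on D̄ with ‖Δδ‖_{L^∞(D)} ≤ L
    ContDiffOn ℝ 2 δ (closure (ball a (2 * R) ∩ ω)) →
    (∀ x ∈ ball a (2 * R) ∩ ω,
      |∑ i : Fin n, fderiv ℝ (fun y => fderiv ℝ δ y (EuclideanSpace.single i (1 : ℝ))) x
        (EuclideanSpace.single i (1 : ℝ))| ≤ L) →
    -- the inward unit normal on B_R(a) ∩ ∂ω
    ∀ νB : EuclideanSpace ℝ (Fin n) → EuclideanSpace ℝ (Fin n),
    (∀ b ∈ ball a R ∩ frontier ω, ‖νB b‖ = 1 ∧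
      ∀ s ∈ Ioo (0 : ℝ) R, b + s • νB b ∈ ω ∧ δ (b + s • νB b) = s) →
    ∀ T₀ θ : ℝ, 0 < θ →
    -- v with spatial gradient Gv, spatial Hessian Hv, and time derivative,
    -- all continuous on D̄ × [T₀-θ, T₀]
    ∀ (v : EuclideanSpace ℝ (Fin n) → ℝ → ℝ) (Gv : EuclideanSpace ℝ (Fin n) → ℝ → EuclideanSpace ℝ (Fin n)) (Hv : EuclideanSpace ℝ (Fin n) → ℝ → (EuclideanSpace ℝ (Fin n) →L[ℝ] EuclideanSpace ℝ (Fin n)))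
      (v' : EuclideanSpace ℝ (Fin n) → ℝ → ℝ),
    ContinuousOn (fun q : EuclideanSpace ℝ (Fin n) × ℝ => (v q.1 q.2, Gv q.1 q.2, Hv q.1 q.2, v' q.1 q.2))
      (closure (ball a (2 * R) ∩ ω) ×ˢ Icc (T₀ - θ) T₀) →
    (∀ t ∈ Icc (T₀ - θ) T₀, ∀ x ∈ closure (ball a (2 * R) ∩ ω),
      HasGradientWithinAt (fun y => v y t) (Gv x t) (closure (ball a (2 * R) ∩ ω)) x) →
    (∀ t ∈ Icc (T₀ - θ) T₀, ∀ x ∈ closure (ball a (2 * R) ∩ ω),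
      HasFDerivWithinAt (fun y => Gv y t) (Hv x t) (closure (ball a (2 * R) ∩ ω)) x) →
    (∀ x ∈ closure (ball a (2 * R) ∩ ω), ∀ t ∈ Icc (T₀ - θ) T₀,
      HasDerivWithinAt (fun s => v x s) (v' x t) (Icc (T₀ - θ) T₀) t) →
    -- vₜ - Δv = |∇v|^p in D × (T₀-θ, T₀)
    (∀ x ∈ ball a (2 * R) ∩ ω, ∀ t ∈ Ioo (T₀ - θ) T₀,
      v' x t - ∑ i : Fin n, ⟪Hv x t (EuclideanSpace.single i (1 : ℝ)),
        EuclideanSpace.single i (1 : ℝ)⟫ = ‖Gv x t‖ ^ p) →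
    -- v = 0 on (B_R(a) ∩ ∂ω) × (T₀-θ, T₀)
    (∀ b ∈ ball a R ∩ frontier ω, ∀ t ∈ Ioo (T₀ - θ) T₀, v b t = 0) →
    -- |vₜ| ≤ M in D × (T₀-θ, T₀)
    (∀ x ∈ ball a (2 * R) ∩ ω, ∀ t ∈ Ioo (T₀ - θ) T₀, |v' x t| ≤ M) →
    -- tangential estimate (5.4), with ν(x) = ∇δ(x)
    (∀ ε ∈ Ioo (0 : ℝ) 1, ∀ x ∈ ball a (2 * R) ∩ ω, ∀ t ∈ Ioo (T₀ - θ) T₀,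
      ∀ τ : EuclideanSpace ℝ (Fin n), ‖τ‖ = 1 → ⟪τ, gradient δ x⟫ = 0 →
        |⟪Gv x t, τ⟫| ^ p + |⟪Hv x t τ, τ⟫| ≤ ε * (δ x) ^ (-(β * p)) + Cf ε) →
    -- hypothesis (5.5)
    ∀ r : ℝ, 0 < r → r ≤ min r₀ R → ∀ σ : ℝ, 0 < σ → σ ≤ r →
    (∀ b ∈ ball a σ ∩ frontier ω, ∀ t ∈ Ioo (T₀ - θ) T₀,
      |⟪Gv (b + r • νB b) t, νB b⟫| ≤ k * r ^ (-β)) →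
    -- conclusion (5.6)
    ∀ x ∈ ball a (σ / 8) ∩ ω, ∀ t ∈ Ioo (T₀ - θ / 4) T₀, ‖Gv x t‖ ≤ K σ θ := by
  have hp1 : 0 < p - 1 := by linarith
  have hβ0 : 0 < β := by rw [hβ]; positivity
  have hβ1 : β < 1 := by rw [hβ, div_lt_one hp1]; linarith
  have hβp1 : β * (p - 1) = 1 := by rw [hβ]; field_simp
  have hβp : β * p = β + 1 := by linarith
  obtain ⟨q, hq⟩ : ∃ q, q = 1 - β := ⟨_, rfl⟩
  have hq0 : 0 < q := by linarith
  obtain ⟨γ, hγ⟩ : ∃ γ, γ = q⁻¹ := ⟨_, rfl⟩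
  have hγ0 : 0 < γ := by rw [hγ]; positivity
  obtain ⟨k1, hk1⟩ : ∃ k1, k1 = (k + dp) / 2 := ⟨_, rfl⟩
  have hk10 : 0 < k1 := by linarith [hk.1, hk.2]
  have hkk : k < k1 := by linarith [hk.2]
  have hkd : k1 < dp := by linarith [hk.2]
  obtain ⟨c, hc⟩ : ∃ c, c = k1 / q := ⟨_, rfl⟩
  have hc0 : 0 < c := by rw [hc]; positivity
  have hcq : c * q = k1 := by rw [hc]; field_simp
  have hkp : k1 ^ p < β * k1 := by
    have h1 : k1 ^ (p - 1) < β := by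
      calc k1 ^ (p - 1) < dp ^ (p - 1) := Real.rpow_lt_rpow hk10.le hkd hp1
        _ = β := by rw [hdp, ← Real.rpow_mul hβ0.le, hβp1, Real.rpow_one]
    have h2 : k1 ^ p = k1 ^ (p - 1) * k1 := by
      rw [← Real.rpow_add_one hk10.ne']; congr 1; ring
    rw [h2]; gcongr
  obtain ⟨⟨ζ, ⟨hζ0, hζ1⟩, hζ⟩, ι, ⟨hι0, hι1⟩, hι⟩ := exists_consts (N := n + 1) hk10 hkp
  obtain ⟨j, hj⟩ : ∃ j : ℝ → ℝ, j = fun σ => min (min 1 σ) (min (ι / (γ * γ)) (ι / c)) := ⟨_, rfl⟩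
  have hj0 : ∀ σ, 0 < σ → 0 < j σ := by
    intro σ hσ
    rw [hj]; positivity
  obtain ⟨κ, hκ⟩ : ∃ κ : ℝ → ℝ → ℝ, κ = fun σ θ => j σ / ((16 + 4 * n) * (θ + θ ^ 2)) := ⟨_, rfl⟩
  have hκ0 : ∀ σ θ, 0 < σ → 0 < θ → 0 < κ σ θ := by
    intro σ θ hσ hθ
    have := hj0 σ hσ
    rw [hκ]; positivity
  obtain ⟨K1, hK1⟩ : ∃ K1 : ℝ → ℝ → ℝ, K1 = fun σ θ =>
    k1 * ((κ σ θ * (5 / 64 * σ ^ 2 * (θ / 4)) ^ 2) ^ γ) ^ (-β) := ⟨_, rfl⟩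
  have hK10 : ∀ σ θ, 0 < σ → 0 < θ → 0 < K1 σ θ := by
    intro σ θ hσ hθ
    have := hκ0 σ θ hσ hθ
    rw [hK1]; positivity
  refine ⟨fun σ θ => 4 * n * (2 * K1 σ θ) /
    (min (1 / 2) (1 / (2 * (2 * (k1 + ζ) ^ (p - 1))))) + (M + 1), ?_, ?_⟩
  · intro σ θ hσ hθ
    have := hK10 σ θ hσ hθ
    positivity
  intro L hL Cf hCf
  have hζp0 : 0 < ζ ^ p := by positivity
  have hε : ζ ^ p / 2 ∈ Ioo (0:ℝ) 1 := by
    refine ⟨by positivity, ?_⟩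
    have := Real.rpow_le_one hζ0.le hζ1.le (by linarith : (0:ℝ) ≤ p)
    linarith
  have hβp0 : 0 < β * p := by linarith
  obtain ⟨r1, hr1, hr1'⟩ := big_rpow (Cf (ζ ^ p / 2) / (ζ ^ p / 2)) hβp0
  obtain ⟨r2, hr2, hr2'⟩ := big_rpow (M / ζ) hβp0
  refine ⟨min (min r1 r2) (min (1 / 2) (ι / (k1 * 2 * (L + 2)))), by positivity, ?_⟩
  intro ω hω hbd hC a ha R hR δ hδ hinner hδ2 hδL νB hνB T₀ θ hθ v Gv Hv v' hcont hGv hHv hv' hpde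
    hv0 hvM htan r hr hrmin σ hσ hσr hend x hx t ht
  have hrR : r ≤ R := hrmin.trans (min_le_right _ _)
  have hrr := hrmin.trans (min_le_left _ _)
  have hrr1 : r ≤ r1 := hrr.trans ((min_le_left _ _).trans (min_le_left _ _))
  have hrr2 : r ≤ r2 := hrr.trans ((min_le_left _ _).trans (min_le_right _ _))
  have hrh : r ≤ 1 / 2 := hrr.trans ((min_le_right _ _).trans (min_le_left _ _))
  have hrL : r ≤ ι / (k1 * 2 * (L + 2)) := hrr.trans ((min_le_right _ _).trans (min_le_right _ _))
  have hDo : IsOpen (ball a (2 * R) ∩ ω) := isOpen_ball.inter hω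
  have hnh : ∀ y ∈ ball a (2 * R) ∩ ω, closure (ball a (2 * R) ∩ ω) ∈ nhds y := fun y hy =>
    mem_of_superset (hDo.mem_nhds hy) subset_closure
  have hG : ∀ t ∈ Ioo (T₀ - θ) T₀, ∀ x ∈ ball a (2 * R) ∩ ω,
      HasGradientAt (fun y => v y t) (Gv x t) x := by
    intro t ht y hy
    have := hGv t (Ioo_subset_Icc_self ht) y (subset_closure hy)
    rw [hasGradientWithinAt_iff_hasFDerivWithinAt] at this
    rw [hasGradientAt_iff_hasFDerivAt]
    exact this.hasFDerivAt (hnh y hy)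
  have hH : ∀ t ∈ Ioo (T₀ - θ) T₀, ∀ x ∈ ball a (2 * R) ∩ ω,
      HasFDerivAt (fun y => Gv y t) (Hv x t) x := by
    intro t ht y hy
    exact (hHv t (Ioo_subset_Icc_self ht) y (subset_closure hy)).hasFDerivAt (hnh y hy)
  have hvt : ∀ t ∈ Ioo (T₀ - θ) T₀, ∀ x ∈ ball a (2 * R) ∩ ω,
      HasDerivAt (fun s => v x s) (v' x t) t := by
    intro t ht y hy
    exact (hv' y (subset_closure hy) t (Ioo_subset_Icc_self ht)).hasDerivAt (Icc_mem_nhds ht.1 ht.2)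
  have hpde' : ∀ t ∈ Ioo (T₀ - θ) T₀, ∀ x ∈ ball a (2 * R) ∩ ω,
      v' x t - tr (Hv x t) = ‖Gv x t‖ ^ p := fun t ht y hy => hpde y hy t ht
  have hsl : ∀ t ∈ Ioo (T₀ - θ) T₀, ContinuousOn (fun y => (v y t, Gv y t))
      (closure (ball a (2 * R) ∩ ω)) := by
    intro t ht
    have h1 : ContinuousOn (fun y : EuclideanSpace ℝ (Fin n) => (y, t))
      (closure (ball a (2 * R) ∩ ω)) := by fun_prop
    have h2 := hcont.comp h1 (fun y hy => ⟨hy, Ioo_subset_Icc_self ht⟩)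
    exact h2.fst.prodMk h2.snd.fst
  have hreg : ∀ t ∈ Ioo (T₀ - θ) T₀, ∀ x ∈ ω, ‖x - a‖ < σ / 2 →
      |v x t| ≤ c * δ x ^ q ∧ ‖Gv x t‖ ≤ (k1 + ζ) * δ x ^ (-β) := by
    intro t ht
    refine region_est hn (M := M) (Cε := Cf (ζ ^ p / 2)) (v' := fun y => v' y t)
      (H := fun y => Hv y t) (by linarith) hβp hq hq0 hcq hk10 hζ0 hζ1 hζ hkk
      hr hrR hσr ?_ ?_ hω hbd hC ha hδ hδ2 hνB (hsl t ht).fst (hsl t ht).snd (hG t ht) (hH t ht)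
      (hpde' t ht) (fun b hb => hv0 b hb t ht) (fun y hy => hvM y hy t ht)
      (fun y hy τ h1 h2 => htan _ hε y hy t ht τ h1 h2) (fun b hb => hend b hb t ht)
    · intro s hs
      have := hr2' s ⟨hs.1, hs.2.le.trans hrr2⟩
      rw [div_le_iff₀ hζ0] at this
      linarith
    · intro s hs
      have := hr1' s ⟨hs.1, hs.2.le.trans hrr1⟩
      rw [div_le_iff₀ hε.1] at this
      linarith
  have htI : t ∈ Ioo (T₀ - θ) T₀ := ⟨by linarith [ht.1], ht.2⟩
  have hjle : j σ ≤ 1 ∧ j σ ≤ σ ∧ j σ ≤ ι / (γ * γ) ∧ j σ ≤ ι / c := by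
    rw [hj]
    exact ⟨(min_le_left _ _).trans (min_le_left _ _), (min_le_left _ _).trans (min_le_right _ _),
      (min_le_right _ _).trans (min_le_left _ _), (min_le_right _ _).trans (min_le_right _ _)⟩
  have hlin : ∀ y ∈ ω, ‖y - a‖ < σ / 4 → |v y t| ≤ K1 σ θ * δ y := by
    intro y hy hyσ
    rw [hK1]
    refine two_sided (n := n) (c := c) (q := q) (ι := ι) (j := j σ) (L := L) (by linarith) hβ0 hβ1 hβp hq hγ hcq
      hk10 hι0 hι1 hι (hκ0 σ θ hσ hθ) hθ ?_ hjle.1 ?_ ?_ hjle.2.1 hσ (hσr.trans hrh) ?_ hL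
      (hσr.trans hrR) hω hbd ha hδ hδ2 hδL hcont.fst hG hH hvt hpde'
      (fun s hs b hb => hv0 b hb s hs) (fun s hs z hz hzσ => (hreg s hs z hz hzσ).1) ht hy hyσ
    · rw [hκ]
      have : (0:ℝ) < (16 + 4 * n) * (θ + θ ^ 2) := by positivity
      simp only
      rw [mul_assoc, div_mul_cancel₀ _ this.ne']
    · have := hjle.2.2.1
      rw [le_div_iff₀ (by positivity)] at this
      linarith
    · have := hjle.2.2.2
      rw [le_div_iff₀ hc0] at this
      linarith
    · have h1 : σ ≤ ι / (k1 * 2 * (L + 2)) := hσr.trans hrL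
      rw [le_div_iff₀ (by positivity)] at h1
      linarith
  have hxa : ‖x - a‖ < σ / 8 := by simpa [dist_eq_norm] using hx.1
  exact final_grad hp hβ0 hβp1 (by positivity) (hK10 σ θ hσ hθ).le hM.le hσ
    (by linarith) (hσr.trans hrR) hω hbd ha hδ (hG t htI) (hH t htI) (hpde' t htI)
    (fun y hy => hvM y hy t htI) (fun y hy hyσ => (hreg t htI y hy hyσ).2) hlin hx.2 hxa
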